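/- Let n ≥ 1 and 1 ≥ ρ > 0 (so δ = 0). Assume σ ∈ S^0_{ρ,0}(ℝⁿ) is real-valued and satisfies σ(x,ξ) ≥ c₀ for all (x,ξ) ∈ ℝⁿ×ℝⁿ, for some constant c₀ > 0. Then there exist constants c > 0 and C > 0 such that for all f ∈ 𝒮(ℝⁿ): Re ∫_{ℝⁿ} Op^{KN}(σ)f(x) · conj(f(x)) dx ≥ c ‖f‖²_{L²(ℝⁿ)} − C ‖f‖²_{H^{−ρ/2}(ℝⁿ)}. (Euclidean analogue, for order 0, of the two-term elliptic Gårding inequality of Theorems 3.2 and 4.5.) -/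

import Mathlib

open MeasureTheory Complex

noncomputable section

/-- `e^{2πit}`. -/
def expi (t : ℝ) : ℂ := Complex.exp (2 * (Real.pi : ℂ) * Complex.I * (t : ℂ))

/-- Dot product on `ℝⁿ`. -/
def dotp {n : ℕ} (x y : Fin n → ℝ) : ℝ := ∑ i, x i * y i

/-- Euclidean Fourier transform `𝓕f(ξ) = ∫ f(y) e^{-2πi y·ξ} dy`. -/
def FT {n : ℕ} (f : (Fin n → ℝ) → ℂ) (ξ : Fin n → ℝ) : ℂ :=
  ∫ y, f y * expi (-(dotp y ξ))

/-- Bargmann-type transform `B_a[f](x,ξ) = ∫ f(y) a(y-x) e^{-2πi y·ξ} dy`. -/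
def Barg {n : ℕ} (a f : (Fin n → ℝ) → ℂ) (x ξ : Fin n → ℝ) : ℂ :=
  ∫ y, f y * a (y - x) * expi (-(dotp y ξ))

/-- Wick quantization with window `a`. -/
def WickOp {n : ℕ} (a : (Fin n → ℝ) → ℂ) (σ : (Fin n → ℝ) → (Fin n → ℝ) → ℂ)
    (f : (Fin n → ℝ) → ℂ) (y : Fin n → ℝ) : ℂ :=
  ∫ p : (Fin n → ℝ) × (Fin n → ℝ),
    σ p.1 p.2 * Barg a f p.1 p.2 * (starRingEnd ℂ) (a (y - p.1)) * expi (dotp y p.2)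

/-- Kohn–Nirenberg quantization. -/
def OpKN {n : ℕ} (σ : (Fin n → ℝ) → (Fin n → ℝ) → ℂ) (f : (Fin n → ℝ) → ℂ)
    (x : Fin n → ℝ) : ℂ :=
  ∫ ξ, expi (dotp x ξ) * σ x ξ * FT f ξ

/-- Partial derivative in the `i`-th coordinate direction. -/
def pd {n : ℕ} (i : Fin n) (F : (Fin n → ℝ) → ℂ) : (Fin n → ℝ) → ℂ :=
  fun x => fderiv ℝ F x (Pi.single i 1)

/-- Multi-index derivative `∂^α`. -/
def md {n : ℕ} (α : Fin n → ℕ) (F : (Fin n → ℝ) → ℂ) : (Fin n → ℝ) → ℂ :=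
  (((List.finRange n).map fun i => (pd i)^[α i]).foldr (· ∘ ·) id) F

/-- Mixed derivative `∂_x^β ∂_ξ^α σ`. -/
def mixedD {n : ℕ} (β α : Fin n → ℕ) (σ : (Fin n → ℝ) → (Fin n → ℝ) → ℂ) :
    (Fin n → ℝ) → (Fin n → ℝ) → ℂ :=
  fun x ξ => md β (fun x' => md α (fun ξ' => σ x' ξ') ξ) x

/-- The weight `1 + |ξ|²` (Euclidean norm squared). -/
def wt {n : ℕ} (ξ : Fin n → ℝ) : ℝ := 1 + ∑ i, ξ i ^ 2

/-- Length `|α|` of a multi-index, as a real number. -/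
def mOrd {n : ℕ} (α : Fin n → ℕ) : ℝ := ∑ i, (α i : ℝ)

/-- The Hörmander class `S^m_{ρ,δ}(ℝⁿ)`. -/
def SymbolClass {n : ℕ} (m ρ δ : ℝ) (σ : (Fin n → ℝ) → (Fin n → ℝ) → ℂ) : Prop :=
  (ContDiff ℝ (⊤ : ℕ∞) fun p : (Fin n → ℝ) × (Fin n → ℝ) => σ p.1 p.2) ∧
  ∀ α β : Fin n → ℕ, ∃ C > 0, ∀ x ξ,
    ‖mixedD β α σ x ξ‖ ≤ C * wt ξ ^ ((m - ρ * mOrd α + δ * mOrd β) / 2)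

/-- The seminorm `‖σ‖_{S^m_{ρ,δ},α,β}`. -/
def hSem {n : ℕ} (m ρ δ : ℝ) (α β : Fin n → ℕ)
    (σ : (Fin n → ℝ) → (Fin n → ℝ) → ℂ) : ℝ :=
  ⨆ p : (Fin n → ℝ) × (Fin n → ℝ),
    wt p.2 ^ (-(m - ρ * mOrd α + δ * mOrd β) / 2) * ‖mixedD β α σ p.1 p.2‖

/-- Squared Sobolev norm `‖f‖²_{H^s}`. -/
def sobSq {n : ℕ} (s : ℝ) (f : (Fin n → ℝ) → ℂ) : ℝ :=
  ∫ ξ, wt ξ ^ s * ‖FT f ξ‖ ^ 2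

end

namespace Gar
open scoped FourierTransform ContDiff RealInnerProductSpace SchwartzMap ENNReal
noncomputable section

/-- Directional derivative. -/
def dd {E : Type*} [NormedAddCommGroup E] [NormedSpace ℝ E] (e : E) (F : E → ℂ) : E → ℂ :=
  fun w => fderiv ℝ F w e

section calcu
variable {E E' : Type*} [NormedAddCommGroup E] [NormedSpace ℝ E]
  [NormedAddCommGroup E'] [NormedSpace ℝ E']

lemma dd_smooth (e : E) {F : E → ℂ} (hF : ContDiff ℝ ∞ F) : ContDiff ℝ ∞ (dd e F) := by
  unfold dd
  exact (hF.fderiv_right (m := ∞) (by simp)).clm_apply contDiff_const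

lemma dd_iter_smooth (e : E) {F : E → ℂ} (hF : ContDiff ℝ ∞ F) (k : ℕ) :
    ContDiff ℝ ∞ ((dd e)^[k] F) := by
  induction k with
  | zero => simpa using hF
  | succ k ih => rw [Function.iterate_succ_apply']; exact dd_smooth e ih

lemma dd_comp (e : E) (L : E →L[ℝ] E') (c : E') {F : E' → ℂ} (hF : ContDiff ℝ ∞ F) :
    dd e (fun x => F (L x + c)) = fun x => dd (L e) F (L x + c) := by
  funext x
  have h1 : HasFDerivAt F (fderiv ℝ F (L x + c)) (L x + c) :=
    (hF.differentiable (by simp)).differentiableAt.hasFDerivAt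
  have h2 : HasFDerivAt (fun x => L x + c) L x := L.hasFDerivAt.add_const c
  have := (h1.comp x h2).fderiv
  unfold dd
  change fderiv ℝ (F ∘ fun x => L x + c) x e = _
  rw [this]; rfl

lemma dd_iter_comp (e : E) (L : E →L[ℝ] E') (c : E') {F : E' → ℂ} (hF : ContDiff ℝ ∞ F) (k : ℕ) :
    (dd e)^[k] (fun x => F (L x + c)) = fun x => ((dd (L e))^[k] F) (L x + c) := by
  induction k with
  | zero => rfl
  | succ k ih =>
    rw [Function.iterate_succ_apply', ih, dd_comp e L c (dd_iter_smooth _ hF k),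
      Function.iterate_succ_apply']

lemma dd_iter_smul (e : E) (r : ℝ) {F : E → ℂ} (hF : ContDiff ℝ ∞ F) (k : ℕ) :
    (dd (r • e))^[k] F = fun x => (r : ℂ) ^ k * ((dd e)^[k] F) x := by
  induction k with
  | zero => simp
  | succ k ih =>
    rw [Function.iterate_succ_apply', ih, Function.iterate_succ_apply']
    funext x
    have hd : DifferentiableAt ℝ ((dd e)^[k] F) x :=
      ((dd_iter_smooth e hF k).differentiable (by simp)).differentiableAt
    unfold dd at *
    rw [fderiv_const_mul hd]
    simp [pow_succ]
    ring

lemma dd_sub_const (e : E) (c : ℂ) (F : E → ℂ) : dd e (fun x => F x - c) = dd e F := by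
  funext x; simp [dd, fderiv_sub_const]

lemma dd_iter_sub_const (e : E) (c : ℂ) (F : E → ℂ) (k : ℕ) (hk : 1 ≤ k) :
    (dd e)^[k] (fun x => F x - c) = (dd e)^[k] F := by
  obtain ⟨k, rfl⟩ : ∃ m, k = m + 1 := ⟨k - 1, by omega⟩
  rw [Function.iterate_succ_apply, dd_sub_const, Function.iterate_succ_apply]

end calcu

/-- Gaussian. -/
def gau {E : Type*} [NormedAddCommGroup E] (c : ℝ) (w : E) : ℝ := Real.exp (-c * ‖w‖ ^ 2)

section gauss
variable {E : Type*} [NormedAddCommGroup E] [InnerProductSpace ℝ E]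

lemma gau_pos (c : ℝ) (w : E) : 0 < gau c w := Real.exp_pos _

lemma gau_smooth (c : ℝ) : ContDiff ℝ ∞ (fun w : E => (gau c w : ℂ)) := by
  unfold gau
  refine Complex.ofRealCLM.contDiff.comp ?_
  exact Real.contDiff_exp.comp (contDiff_const.mul (contDiff_norm_sq ℝ))

lemma gau_hasFDerivAt (c : ℝ) (w e : E) :
    fderiv ℝ (fun w : E => (gau c w : ℂ)) w e = -(2 * c * ⟪e, w⟫) * gau c w := by
  have h1 : HasFDerivAt (fun w : E => -c * ‖w‖ ^ 2) ((-c) • (2 • innerSL ℝ w)) w :=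
    (hasStrictFDerivAt_norm_sq w).hasFDerivAt.const_mul (-c)
  have h2 := h1.exp
  have h3 : HasFDerivAt (fun w : E => (gau c w : ℂ)) _ w :=
    (Complex.ofRealCLM.hasFDerivAt (x := gau c w)).comp w h2
  rw [h3.fderiv]
  simp [gau, real_inner_comm]
  ring

lemma poly_smooth (q : Polynomial ℝ) (e : E) :
    ContDiff ℝ ∞ (fun w : E => ((q.eval ⟪e, w⟫ : ℝ) : ℂ)) := by
  refine Complex.ofRealCLM.contDiff.comp ?_
  exact (Polynomial.contDiff_aeval q ∞ |>.comp (innerSL ℝ e).contDiff)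

lemma dd_poly (q : Polynomial ℝ) (e : E) :
    dd e (fun w : E => ((q.eval ⟪e, w⟫ : ℝ) : ℂ)) =
      fun w => (((q.derivative * Polynomial.C (‖e‖ ^ 2)).eval ⟪e, w⟫ : ℝ) : ℂ) := by
  funext w
  have h1 := (q.hasDerivAt ⟪e, w⟫).hasFDerivAt.comp w (innerSL ℝ e).hasFDerivAt
  have h3 : HasFDerivAt (fun w : E => ((q.eval ⟪e, w⟫ : ℝ) : ℂ)) _ w :=
    (Complex.ofRealCLM.hasFDerivAt).comp w h1
  unfold dd
  rw [h3.fderiv]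
  simp
  ring

lemma dd_mul (e : E) {F H : E → ℂ} (hF : ContDiff ℝ ∞ F) (hH : ContDiff ℝ ∞ H) :
    dd e (fun w => F w * H w) = fun w => dd e F w * H w + F w * dd e H w := by
  funext w
  unfold dd
  rw [fderiv_fun_mul (hF.differentiable (by simp)).differentiableAt
    (hH.differentiable (by simp)).differentiableAt]
  simp
  ring

lemma dd_sum (e : E) {ι : Type*} (s : Finset ι) {F : ι → E → ℂ} (hF : ∀ i, ContDiff ℝ ∞ (F i)) :
    dd e (fun w => ∑ i ∈ s, F i w) = fun w => ∑ i ∈ s, dd e (F i) w := by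
  funext w
  unfold dd
  rw [fderiv_fun_sum fun i _ => ((hF i).differentiable (by simp)).differentiableAt]
  simp

lemma dd_gauss (c : ℝ) (e : E) (k : ℕ) : ∃ q : ℕ → Polynomial ℝ, (∀ i, k < i → q i = 0) ∧
    ∀ F : E → ℂ, ContDiff ℝ ∞ F →
    (dd e)^[k] (fun w => F w * gau c w) = fun w =>
      (∑ i ∈ Finset.range (k + 1), (((q i).eval ⟪e, w⟫ : ℝ) : ℂ) * ((dd e)^[i] F) w) * gau c w := by
  induction k with
  | zero =>
    refine ⟨fun i => if i = 0 then 1 else 0, ?_, ?_⟩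
    · intro i hi; simp; omega
    · intro F hF; simp
  | succ k ih =>
    obtain ⟨q, hq0, hq⟩ := ih
    refine ⟨fun i => (q i).derivative * Polynomial.C (‖e‖ ^ 2)
      - Polynomial.C (2 * c) * Polynomial.X * q i + (if i = 0 then 0 else q (i - 1)), ?_, ?_⟩
    · intro i hi
      have h1 : q i = 0 := hq0 i (by omega)
      have h2 : q (i - 1) = 0 := hq0 _ (by omega)
      simp [h1, h2]
    · intro F hF
      rw [Function.iterate_succ_apply', hq F hF]
      have hsm : ∀ i, ContDiff ℝ ∞
          (fun w => (((q i).eval ⟪e, w⟫ : ℝ) : ℂ) * ((dd e)^[i] F) w) := fun i =>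
        (poly_smooth (q i) e).mul (dd_iter_smooth e hF i)
      rw [dd_mul e (ContDiff.sum fun i _ => hsm i) (gau_smooth c), dd_sum e _ hsm]
      funext w
      have hg : dd e (fun w : E => (gau c w : ℂ)) w = -(2 * c * ⟪e, w⟫) * gau c w :=
        gau_hasFDerivAt c w e
      rw [hg]
      have ht : ∀ i, dd e (fun w => (((q i).eval ⟪e, w⟫ : ℝ) : ℂ) * ((dd e)^[i] F) w) w
          = ((((q i).derivative * Polynomial.C (‖e‖ ^ 2)).eval ⟪e, w⟫ : ℝ) : ℂ) * ((dd e)^[i] F) w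
            + (((q i).eval ⟪e, w⟫ : ℝ) : ℂ) * ((dd e)^[i+1] F) w := by
        intro i
        rw [dd_mul e (poly_smooth (q i) e) (dd_iter_smooth e hF i), dd_poly,
          Function.iterate_succ_apply']
      simp_rw [ht]
      have hR : ∑ i ∈ Finset.range (k + 1 + 1),
          ((((q i).derivative * Polynomial.C (‖e‖ ^ 2)
            - Polynomial.C (2 * c) * Polynomial.X * q i
            + (if i = 0 then 0 else q (i - 1))).eval ⟪e, w⟫ : ℝ) : ℂ) * ((dd e)^[i] F) w
          = ∑ i ∈ Finset.range (k + 1),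
            ((((q i).derivative * Polynomial.C (‖e‖ ^ 2)
            - Polynomial.C (2 * c) * Polynomial.X * q i).eval ⟪e, w⟫ : ℝ) : ℂ) * ((dd e)^[i] F) w
          + ∑ i ∈ Finset.range (k + 1), (((q i).eval ⟪e, w⟫ : ℝ) : ℂ) * ((dd e)^[i+1] F) w := by
        simp only [Polynomial.eval_add, Complex.ofReal_add, add_mul, Finset.sum_add_distrib]
        congr 1
        · rw [Finset.sum_range_succ]
          simp [hq0 (k+1) (by omega)]
        · rw [Finset.sum_range_succ']
          simp
      rw [hR, Finset.sum_add_distrib]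
      simp only [add_mul, Finset.sum_mul, Finset.mul_sum, ← Finset.sum_add_distrib]
      refine Finset.sum_congr rfl fun i _ => ?_
      simp
      ring

lemma poly_bound (q : Polynomial ℝ) : ∃ C : ℝ, 0 ≤ C ∧ ∃ N : ℕ, ∀ t : ℝ,
    |q.eval t| ≤ C * (1 + |t|) ^ N := by
  refine ⟨∑ i ∈ Finset.range (q.natDegree + 1), |q.coeff i|,
    Finset.sum_nonneg fun _ _ => abs_nonneg _, q.natDegree, fun t => ?_⟩
  rw [Polynomial.eval_eq_sum_range, Finset.sum_mul]
  refine (Finset.abs_sum_le_sum_abs _ _).trans (Finset.sum_le_sum fun i hi => ?_)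
  rw [abs_mul, abs_pow]
  refine mul_le_mul_of_nonneg_left ?_ (abs_nonneg _)
  have : i ≤ q.natDegree := by simpa [Nat.lt_succ_iff] using hi
  calc |t| ^ i ≤ (1 + |t|) ^ i := by gcongr; linarith
    _ ≤ _ := pow_le_pow_right₀ (by linarith [abs_nonneg t]) this

/-- Leibniz bound for products with a Gaussian. -/
lemma dd_gauss_bound (c : ℝ) (e : E) (he : ‖e‖ = 1) (k : ℕ) : ∃ C : ℝ, 0 ≤ C ∧ ∃ N : ℕ,
    ∀ F : E → ℂ, ContDiff ℝ ∞ F → ∀ w, ‖((dd e)^[k] (fun w => F w * gau c w)) w‖ ≤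
      C * (1 + ‖w‖) ^ N * gau c w * ∑ i ∈ Finset.range (k + 1), ‖((dd e)^[i] F) w‖ := by
  obtain ⟨q, -, hq⟩ := dd_gauss c e k
  choose C hC N hN using fun i => poly_bound (q i)
  refine ⟨∑ i ∈ Finset.range (k + 1), C i, Finset.sum_nonneg fun i _ => hC i,
    ∑ i ∈ Finset.range (k + 1), N i, fun F hF w => ?_⟩
  rw [hq F hF]
  simp only [norm_mul, Complex.norm_real, Real.norm_eq_abs, abs_of_pos (gau_pos c w)]
  have hin : |⟪e, w⟫| ≤ ‖w‖ := by simpa [he] using abs_real_inner_le_norm e w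
  have key : ‖∑ i ∈ Finset.range (k + 1), (((q i).eval ⟪e, w⟫ : ℝ) : ℂ) * ((dd e)^[i] F) w‖ ≤
      (∑ i ∈ Finset.range (k + 1), C i) * (1 + ‖w‖) ^ (∑ i ∈ Finset.range (k + 1), N i) *
        ∑ i ∈ Finset.range (k + 1), ‖((dd e)^[i] F) w‖ := by
    refine (norm_sum_le _ _).trans ?_
    rw [Finset.mul_sum]
    refine Finset.sum_le_sum fun i hi => ?_
    rw [norm_mul]
    refine mul_le_mul_of_nonneg_right ?_ (norm_nonneg _)
    rw [Complex.norm_real, Real.norm_eq_abs]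
    refine (hN i _).trans ?_
    refine mul_le_mul (Finset.single_le_sum (f := C) (fun i _ => hC i) hi) ?_ (by positivity)
      (Finset.sum_nonneg fun i _ => hC i)
    calc (1 + |⟪e, w⟫|) ^ N i ≤ (1 + ‖w‖) ^ N i := by gcongr
      _ ≤ _ := pow_le_pow_right₀ (by linarith [norm_nonneg w])
        (Finset.single_le_sum (f := N) (fun i _ => Nat.zero_le _) hi)
  calc _ ≤ _ := mul_le_mul_of_nonneg_right key (gau_pos c w).le
    _ = _ := by ring

end gauss

section dec
variable {E : Type*} [NormedAddCommGroup E] [InnerProductSpace ℝ E] [FiniteDimensional ℝ E]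
  [MeasurableSpace E] [BorelSpace E]

lemma gau_cont (c : ℝ) : Continuous (fun w : E => gau c w) := by
  unfold gau; fun_prop

lemma gau_integrable {c : ℝ} (hc : 0 < c) : Integrable (fun w : E => gau c w) := by
  have := (GaussianFourier.integrable_cexp_neg_mul_sq_norm_add (V := E) (b := (c:ℂ)) (by simpa using hc) 0 0).re
  refine this.congr (Filter.Eventually.of_forall fun w => ?_)
  simp only [gau]
  have h : (-(c:ℂ) * (‖w‖:ℂ)^2 + 0 * ((⟪(0:E), w⟫ : ℝ):ℂ)) = ((-c * ‖w‖^2 : ℝ) : ℂ) := by push_cast; ring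
  rw [h, ← Complex.ofReal_exp]
  rfl

lemma poly_gau_le {c : ℝ} (hc : 0 < c) (m : ℕ) : ∃ C : ℝ, 0 ≤ C ∧ ∀ w : E,
    (1 + ‖w‖) ^ m * gau c w ≤ C * gau (c/2) w := by
  refine ⟨m.factorial * Real.exp (1 + 1/(2*c)), by positivity, fun w => ?_⟩
  have h1 := Real.pow_div_factorial_le_exp (1 + ‖w‖) (by positivity) m
  rw [div_le_iff₀ (by positivity)] at h1
  have h2 : 1 + ‖w‖ + -c * ‖w‖^2 ≤ 1 + 1/(2*c) + -(c/2) * ‖w‖^2 := by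
    have : 0 ≤ (c * ‖w‖ - 1)^2 / (2*c) := by positivity
    have h3 : (c * ‖w‖ - 1)^2 / (2*c) = c/2*‖w‖^2 - ‖w‖ + 1/(2*c) := by field_simp; ring
    linarith
  unfold gau
  calc _ ≤ Real.exp (1 + ‖w‖) * m.factorial * Real.exp (-c * ‖w‖^2) := by gcongr
    _ = m.factorial * Real.exp (1 + ‖w‖ + -c * ‖w‖^2) := by rw [Real.exp_add (1 + ‖w‖)]; ring
    _ ≤ m.factorial * Real.exp (1 + 1/(2*c) + -(c/2) * ‖w‖^2) := by gcongr
    _ = _ := by rw [Real.exp_add (1 + 1/(2*c))]; ring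

lemma poly_gau_integrable {c : ℝ} (hc : 0 < c) (m : ℕ) :
    Integrable (fun w : E => (1 + ‖w‖) ^ m * gau c w) := by
  obtain ⟨C, hC, h⟩ := poly_gau_le (E := E) hc m
  refine ((gau_integrable (E := E) (half_pos hc)).const_mul C).mono'
    (by have := gau_cont (E := E) c; fun_prop) (Filter.Eventually.of_forall fun w => ?_)
  rw [Real.norm_of_nonneg (by have := gau_pos c w; positivity)]
  exact h w

lemma fourier_dd (e : E) {b : E → ℂ} (hb : ContDiff ℝ ∞ b) (hi : Integrable b)
    (hi' : Integrable (dd e b)) (θ : E) :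
    𝓕 (dd e b) θ = 2 * Real.pi * I * ⟪e, θ⟫ * 𝓕 b θ := by
  rw [Real.fourier_eq', Real.fourier_eq']
  have hd : ∀ v : E, HasFDerivAt (fun v : E => cexp (((-2 * Real.pi * ⟪v, θ⟫ : ℝ) : ℂ) * I))
      (cexp (((-2 * Real.pi * ⟪v, θ⟫ : ℝ) : ℂ) * I) •
        (I • (Complex.ofRealCLM.comp ((-2 * Real.pi) • innerSL ℝ θ)))) v := by
    intro v
    have h1 : HasFDerivAt (fun v : E => -2 * Real.pi * ⟪v, θ⟫) ((-2 * Real.pi) • innerSL ℝ θ) v := by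
      have := ((innerSL ℝ θ).hasFDerivAt (x := v)).const_mul (-2 * Real.pi)
      simpa [real_inner_comm] using this
    have h2 := (Complex.ofRealCLM.hasFDerivAt.comp v h1).mul_const I
    exact h2.cexp
  have hn : ∀ v : E, ‖cexp (((-2 * Real.pi * ⟪v, θ⟫ : ℝ) : ℂ) * I)‖ = 1 := fun v =>
    Complex.norm_exp_ofReal_mul_I _
  have hc : Continuous (fun v : E => cexp (((-2 * Real.pi * ⟪v, θ⟫ : ℝ) : ℂ) * I)) := by fun_prop
  have hf' : ∀ v : E, fderiv ℝ (fun v : E => cexp (((-2 * Real.pi * ⟪v, θ⟫ : ℝ) : ℂ) * I)) v e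
      = -(2 * Real.pi * I * ⟪e, θ⟫) * cexp (((-2 * Real.pi * ⟪v, θ⟫ : ℝ) : ℂ) * I) := by
    intro v
    rw [(hd v).fderiv]
    simp [real_inner_comm]
    ring
  have key := integral_mul_fderiv_eq_neg_fderiv_mul_of_integrable (μ := (volume : Measure E)) (𝕜 := ℂ)
    (f := fun v : E => cexp (((-2 * Real.pi * ⟪v, θ⟫ : ℝ) : ℂ) * I)) (g := b) (v := e)
    (by
      have h5 := (hi.bdd_mul hc.aestronglyMeasurable (c := 1)
        (Filter.Eventually.of_forall fun v => (hn v).le)).const_mul (-(2 * Real.pi * I * ⟪e, θ⟫))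
      refine h5.congr (Filter.Eventually.of_forall fun v => ?_)
      beta_reduce
      rw [hf' v, mul_assoc (-(2 * Real.pi * I * ⟪e, θ⟫ : ℂ))])
    (hi'.bdd_mul hc.aestronglyMeasurable (c := 1) (Filter.Eventually.of_forall fun v => (hn v).le))
    (hi.bdd_mul hc.aestronglyMeasurable (c := 1) (Filter.Eventually.of_forall fun v => (hn v).le))
    (fun v _ => (hd v).differentiableAt)
    (fun v _ => (hb.differentiable (by simp)).differentiableAt)
  simp only [smul_eq_mul]
  change ∫ v, cexp (((-2 * Real.pi * ⟪v, θ⟫ : ℝ) : ℂ) * I) * dd e b v = _ at key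
  rw [key]
  simp_rw [hf', mul_assoc]
  rw [integral_const_mul]
  ring

lemma fourier_dd_iter (e : E) {b : E → ℂ} (hb : ContDiff ℝ ∞ b) (K : ℕ)
    (hi : ∀ i ≤ K, Integrable ((dd e)^[i] b)) (θ : E) :
    𝓕 ((dd e)^[K] b) θ = (2 * Real.pi * I * ⟪e, θ⟫) ^ K * 𝓕 b θ := by
  induction K with
  | zero => simp
  | succ K ih =>
    rw [Function.iterate_succ_apply', fourier_dd e (dd_iter_smooth e hb K) (hi K (by omega)),
      ih fun i h => hi i (by omega)]
    · ring
    · have := hi (K+1) le_rfl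
      rwa [Function.iterate_succ_apply'] at this

lemma fourier_norm_le (b : E → ℂ) (θ : E) : ‖𝓕 b θ‖ ≤ ∫ v, ‖b v‖ := by
  rw [Real.fourier_eq']
  refine (norm_integral_le_integral_norm _).trans (le_of_eq ?_)
  congr 1; funext v
  rw [norm_smul, Complex.norm_exp_ofReal_mul_I, one_mul]

lemma fourier_decay {ι : Type*} [Fintype ι] [Nonempty ι] (β : OrthonormalBasis ι ℝ E) (K : ℕ) {b : E → ℂ}
    (hb : ContDiff ℝ ∞ b) (hi : ∀ j, ∀ i ≤ K, Integrable ((dd (β j))^[i] b)) {M : ℝ}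
    (hM : ∀ j, ∀ i ≤ K, ∫ v, ‖((dd (β j))^[i] b) v‖ ≤ M) (θ : E) :
    (1 + ‖θ‖) ^ K * ‖𝓕 b θ‖ ≤ (2 ^ K * (1 + (Fintype.card ι : ℝ) ^ K)) * M := by
  obtain ⟨j, -, hj⟩ := Finset.exists_max_image Finset.univ (fun j => |⟪β j, θ⟫|) Finset.univ_nonempty
  have h0 : ‖𝓕 b θ‖ ≤ M := (fourier_norm_le b θ).trans (hM j 0 (Nat.zero_le _))
  have hK : |⟪β j, θ⟫| ^ K * ‖𝓕 b θ‖ ≤ M := by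
    have h1 := (fourier_norm_le ((dd (β j))^[K] b) θ).trans (hM j K le_rfl)
    rw [fourier_dd_iter (β j) hb K (hi j), norm_mul, norm_pow] at h1
    refine le_trans ?_ h1
    gcongr
    simp only [norm_mul, Complex.norm_real, Complex.norm_I, Real.norm_eq_abs, Complex.norm_ofNat]
    rw [abs_of_pos Real.pi_pos]
    nlinarith [Real.pi_gt_three, abs_nonneg ⟪β j, θ⟫]
  have hθ : ‖θ‖ ≤ Fintype.card ι * |⟪β j, θ⟫| := by
    conv_lhs => rw [← β.sum_repr' θ]
    refine (norm_sum_le _ _).trans ?_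
    calc _ ≤ ∑ i : ι, |⟪β j, θ⟫| := by
          refine Finset.sum_le_sum fun i _ => ?_
          rw [norm_smul, β.norm_eq_one, mul_one, Real.norm_eq_abs]
          exact hj i (Finset.mem_univ _)
      _ = _ := by simp
  have hp : (1 + ‖θ‖) ^ K ≤ 2 ^ K * (1 + ‖θ‖ ^ K) := by
    rcases le_total ‖θ‖ 1 with h | h
    · calc (1 + ‖θ‖) ^ K ≤ 2 ^ K := by gcongr; linarith
        _ ≤ _ := by nlinarith [pow_nonneg (norm_nonneg θ) K, pow_pos (two_pos : (0:ℝ) < 2) K]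
    · calc (1 + ‖θ‖) ^ K ≤ (2 * ‖θ‖) ^ K := by gcongr; linarith
        _ = 2 ^ K * ‖θ‖ ^ K := mul_pow _ _ _
        _ ≤ _ := by gcongr; linarith
  have hθK : ‖θ‖ ^ K * ‖𝓕 b θ‖ ≤ (Fintype.card ι : ℝ) ^ K * M := by
    calc ‖θ‖ ^ K * ‖𝓕 b θ‖ ≤ (Fintype.card ι * |⟪β j, θ⟫|) ^ K * ‖𝓕 b θ‖ := by gcongr
      _ = (Fintype.card ι : ℝ) ^ K * (|⟪β j, θ⟫| ^ K * ‖𝓕 b θ‖) := by rw [mul_pow]; ring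
      _ ≤ _ := by gcongr
  calc _ ≤ 2 ^ K * (1 + ‖θ‖ ^ K) * ‖𝓕 b θ‖ := by gcongr
    _ = 2 ^ K * (‖𝓕 b θ‖ + ‖θ‖ ^ K * ‖𝓕 b θ‖) := by ring
    _ ≤ 2 ^ K * (M + (Fintype.card ι : ℝ) ^ K * M) := by gcongr
    _ = _ := by ring

lemma taylor0 {ι : Type*} [Fintype ι] (β : OrthonormalBasis ι ℝ E) {A : E → ℂ}
    (hA : ContDiff ℝ ∞ A) (p : E) {M : ℝ} (hM : 0 ≤ M)
    (h : ∀ j w, ‖dd (β j) A (w + p)‖ ≤ M * (1 + ‖w‖) ^ 2) (w : E) :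
    ‖A (w + p) - A p‖ ≤ Fintype.card ι * M * (1 + ‖w‖) ^ 3 := by
  have hd : ∀ t ∈ Set.Icc (0:ℝ) 1, HasDerivWithinAt (fun t : ℝ => A (t • w + p))
      (fderiv ℝ A (t • w + p) w) (Set.Icc 0 1) t := by
    intro t _
    have h1 : HasFDerivAt A (fderiv ℝ A (t • w + p)) (t • w + p) :=
      (hA.differentiable (by simp)).differentiableAt.hasFDerivAt
    have h2 : HasDerivAt (fun t : ℝ => t • w + p) w t := by
      simpa using ((hasDerivAt_id t).smul_const w).add_const p
    exact (h1.comp_hasDerivAt t h2).hasDerivWithinAt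
  have := norm_image_sub_le_of_norm_deriv_le_segment_01' (C := Fintype.card ι * M * (1 + ‖w‖) ^ 3) hd ?_
  · simpa using this
  · intro t ht
    have hw : fderiv ℝ A (t • w + p) w = ∑ j, ((⟪β j, w⟫ : ℝ) : ℂ) * dd (β j) A (t • w + p) := by
      have := congrArg (fderiv ℝ A (t • w + p)) (β.sum_repr' w)
      rw [← this, map_sum]
      simp [dd]
    rw [hw]
    refine (norm_sum_le _ _).trans ?_
    calc _ ≤ ∑ j : ι, M * (1 + ‖w‖) ^ 3 := by
          refine Finset.sum_le_sum fun j _ => ?_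
          rw [norm_mul, Complex.norm_real, Real.norm_eq_abs]
          have a1 : |⟪β j, w⟫| ≤ 1 + ‖w‖ := by
            have := abs_real_inner_le_norm (β j) w
            rw [β.norm_eq_one, one_mul] at this; linarith
          have a2 : ‖t • w‖ ≤ ‖w‖ := by
            rw [norm_smul, Real.norm_of_nonneg ht.1]
            nlinarith [norm_nonneg w, ht.2]
          calc _ ≤ (1 + ‖w‖) * (M * (1 + ‖t • w‖) ^ 2) := by
                gcongr; exact h j _
            _ ≤ (1 + ‖w‖) * (M * (1 + ‖w‖) ^ 2) := by gcongr
            _ = _ := by ring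
      _ = _ := by simp; ring

/-- the localized symbol difference -/
def bloc (c : ℝ) (A : E → ℂ) (p : E) : E → ℂ := fun w => (A (w + p) - A p) * gau c w

lemma bloc_decay {ι : Type*} [Fintype ι] [Nonempty ι] (β : OrthonormalBasis ι ℝ E) (K : ℕ)
    {c : ℝ} (hc : 0 < c) :
    ∃ C : ℝ, 0 ≤ C ∧ ∀ A : E → ℂ, ContDiff ℝ ∞ A → ∀ p : E, ∀ M : ℝ, 0 ≤ M →
      (∀ j, ∀ i, 1 ≤ i → i ≤ K + 1 → ∀ w, ‖((dd (β j))^[i] A) (w + p)‖ ≤ M * (1 + ‖w‖) ^ 2) →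
      Continuous (bloc c A p) ∧ Integrable (bloc c A p) ∧
        ∀ θ, (1 + ‖θ‖) ^ K * ‖𝓕 (bloc c A p) θ‖ ≤ C * M := by
  choose C1 hC1 N hN using fun (ji : ι × ℕ) =>
    dd_gauss_bound c (β ji.1) (β.norm_eq_one ji.1) ji.2
  set Cs : ℝ := (Fintype.card ι + K + 1 : ℝ) with hCs
  -- integral constants
  set J : ι → ℕ → ℝ := fun j i => C1 (j,i) * (Cs * ∫ w : E, (1 + ‖w‖) ^ (N (j,i) + 3) * gau c w) with hJ
  have hint : ∀ m : ℕ, 0 ≤ ∫ w : E, (1 + ‖w‖) ^ m * gau c w := fun m =>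
    integral_nonneg fun w => by have := gau_pos c w; positivity
  have hJ0 : ∀ j i, 0 ≤ J j i := fun j i =>
    mul_nonneg (hC1 _) (mul_nonneg (by positivity) (hint _))
  set S : ℝ := ∑ j, ∑ i ∈ Finset.range (K+1), J j i with hS
  have hS0 : 0 ≤ S := Finset.sum_nonneg fun j _ => Finset.sum_nonneg fun i _ => hJ0 j i
  refine ⟨(2 ^ K * (1 + (Fintype.card ι : ℝ) ^ K)) * S, by positivity, fun A hA p M hM h => ?_⟩
  have hF : ContDiff ℝ ∞ (fun w => A (w + p) - A p) :=
    (hA.comp (contDiff_id.add contDiff_const)).sub contDiff_const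
  have hb : ContDiff ℝ ∞ (bloc c A p) := hF.mul (gau_smooth c)
  have hdF : ∀ j i, i ≤ K → ∀ w, ‖((dd (β j))^[i] (fun w => A (w + p) - A p)) w‖ ≤
      (if i = 0 then (Fintype.card ι : ℝ) else 1) * M * (1 + ‖w‖) ^ 3 := by
    intro j i hiK w
    rcases Nat.eq_zero_or_pos i with rfl | hi
    · simpa using taylor0 β hA p hM (fun j w => by simpa using h j 1 le_rfl (by omega) w) w
    · rw [dd_iter_sub_const _ _ _ _ hi]
      have := dd_iter_comp (β j) (ContinuousLinearMap.id ℝ E) p hA i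
      simp only [ContinuousLinearMap.id_apply] at this
      rw [this, if_neg (by omega), one_mul]
      refine (h j i hi (by omega) w).trans ?_
      gcongr
      · linarith [norm_nonneg w]
      · omega
  have hsum : ∀ j, ∀ i ≤ K, ∀ w, ∑ l ∈ Finset.range (i+1),
      ‖((dd (β j))^[l] (fun w => A (w + p) - A p)) w‖ ≤ Cs * M * (1 + ‖w‖) ^ 3 := by
    intro j i hi w
    calc _ ≤ ∑ l ∈ Finset.range (i+1), (if l = 0 then (Fintype.card ι : ℝ) else 1) * M * (1 + ‖w‖) ^ 3 :=
          Finset.sum_le_sum fun l hl => hdF j l (by simp at hl; omega) w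
      _ = (Fintype.card ι + i) * M * (1 + ‖w‖) ^ 3 := by
          rw [Finset.sum_range_succ']; simp; ring
      _ ≤ _ := by
          have : (i:ℝ) ≤ K := by exact_mod_cast hi
          rw [hCs]; gcongr ?_ * _ * _; linarith
  have hpt : ∀ j, ∀ i ≤ K, ∀ w, ‖((dd (β j))^[i] (bloc c A p)) w‖ ≤
      C1 (j,i) * (Cs * M) * ((1 + ‖w‖) ^ (N (j,i) + 3) * gau c w) := by
    intro j i hi w
    refine (hN (j,i) _ hF w).trans ?_
    have g0 := (gau_pos c w).le
    calc _ ≤ C1 (j,i) * (1 + ‖w‖) ^ (N (j,i)) * gau c w * (Cs * M * (1 + ‖w‖) ^ 3) := by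
          have := hC1 (j,i)
          gcongr; exact hsum j i hi w
      _ = _ := by ring
  have hInt : ∀ j, ∀ i ≤ K, Integrable ((dd (β j))^[i] (bloc c A p)) := fun j i hi =>
    ((poly_gau_integrable hc _).const_mul _).mono'
      (dd_iter_smooth _ hb i).continuous.aestronglyMeasurable
      (Filter.Eventually.of_forall fun w => hpt j i hi w)
  refine ⟨hb.continuous, by simpa using hInt (Classical.arbitrary ι) 0 (Nat.zero_le _), fun θ => ?_⟩
  have := fourier_decay β K hb hInt (M := S * M) (fun j i hi => ?_) θ
  · linarith
  · calc _ ≤ ∫ w, C1 (j,i) * (Cs * M) * ((1 + ‖w‖) ^ (N (j,i) + 3) * gau c w) :=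
          integral_mono (hInt j i hi).norm ((poly_gau_integrable hc _).const_mul _) (hpt j i hi)
      _ = J j i * M := by rw [integral_const_mul]; simp only [hJ]; ring
      _ ≤ S * M := by
          gcongr
          refine le_trans ?_ (Finset.single_le_sum (f := fun j => ∑ i ∈ Finset.range (K+1), J j i)
            (fun j _ => Finset.sum_nonneg fun i _ => hJ0 j i) (Finset.mem_univ j))
          exact Finset.single_le_sum (f := fun i => J j i) (fun i _ => hJ0 j i) (by simp; omega)

end dec

/-- phase -/
def ph (t : ℝ) : ℂ := cexp (((2 * Real.pi * t : ℝ) : ℂ) * I)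

lemma ph_norm (t : ℝ) : ‖ph t‖ = 1 := Complex.norm_exp_ofReal_mul_I _
lemma ph_add (s t : ℝ) : ph (s + t) = ph s * ph t := by
  unfold ph; rw [← Complex.exp_add]; congr 1; push_cast; ring
lemma ph_zero : ph 0 = 1 := by simp [ph]
lemma ph_conj (t : ℝ) : (starRingEnd ℂ) (ph t) = ph (-t) := by
  unfold ph; rw [← Complex.exp_conj]; congr 1
  rw [map_mul, Complex.conj_ofReal, Complex.conj_I]; push_cast; ring
lemma ph_cont : Continuous ph := by unfold ph; fun_prop

section pln
variable {V : Type*} [NormedAddCommGroup V] [InnerProductSpace ℝ V] [FiniteDimensional ℝ V]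
  [MeasurableSpace V] [BorelSpace V]

lemma fourier_ph (f : V → ℂ) (w : V) : 𝓕 f w = ∫ v, ph (-⟪v, w⟫) * f v := by
  rw [Real.fourier_eq']
  congr 1; funext v
  rw [smul_eq_mul]; unfold ph; congr 3
  ring_nf

lemma gau_temperate {c : ℝ} (hc : 0 < c) :
    (fun w : V => (gau c w : ℂ)).HasTemperateGrowth := by
  have h : (Real.exp ∘ fun w : V => -c * ‖w‖ ^ 2).HasTemperateGrowth := by
    have hf : (fun w : V => -c * ‖w‖ ^ 2).HasTemperateGrowth :=
      (Function.HasTemperateGrowth.const (-c)).mul (Function.hasTemperateGrowth_norm_sq V)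
    refine Function.HasTemperateGrowth.comp' (t := Set.Iio 1) ?_ isOpen_Iio.uniqueDiffOn
      Real.contDiff_exp.contDiffOn ?_ hf
    · rintro - ⟨y, rfl⟩
      simp only [Set.mem_Iio]
      nlinarith [sq_nonneg ‖y‖]
    · intro N
      refine ⟨0, Real.exp 1, (Real.exp_pos 1).le, fun n _ x hx => ?_⟩
      rw [norm_iteratedFDerivWithin_eq_norm_iteratedDerivWithin,
        iteratedDerivWithin_eq_iteratedDeriv isOpen_Iio.uniqueDiffOn
          Real.contDiff_exp.contDiffAt hx, iteratedDeriv_eq_iterate, Real.iter_deriv_exp]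
      rw [Real.norm_of_nonneg (Real.exp_pos x).le]
      simp only [pow_zero, mul_one]
      exact Real.exp_le_exp.2 (le_of_lt hx)
  exact Function.HasTemperateGrowth.comp Function.Complex.hasTemperateGrowth_ofReal h

/-- windowed Schwartz function -/
def locS (c : ℝ) (f : 𝓢(V, ℂ)) (z : V) : 𝓢(V, ℂ) :=
  SchwartzMap.smulLeftCLM ℂ (fun w : V => (gau c w : ℂ)) (SchwartzMap.compSubConstCLM ℂ (-z) f)

lemma locS_apply {c : ℝ} (hc : 0 < c) (f : 𝓢(V, ℂ)) (z u : V) :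
    locS c f z u = gau c u * f (u + z) := by
  unfold locS
  rw [SchwartzMap.smulLeftCLM_apply_apply (gau_temperate hc), SchwartzMap.compSubConstCLM_apply]
  simp

/-- Gabor transform with Gaussian window -/
def GT (c : ℝ) (f : V → ℂ) (z ζ : V) : ℂ := ∫ u, ph (-⟪u, ζ⟫) * (gau c u * f (u + z))

lemma GT_eq {c : ℝ} (hc : 0 < c) (f : 𝓢(V, ℂ)) (z ζ : V) : GT c f z ζ = 𝓕 (locS c f z) ζ := by
  rw [SchwartzMap.fourier_coe, fourier_ph]
  simp_rw [locS_apply hc]; rfl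

lemma GT_sm (c : ℝ) {f : V → ℂ} (hf : Continuous f) :
    StronglyMeasurable (fun p : V × V => GT c f p.1 p.2) := by
  have : StronglyMeasurable (fun q : (V × V) × V =>
      ph (-⟪q.2, q.1.2⟫) * (gau c q.2 * f (q.2 + q.1.1))) := by
    apply Continuous.stronglyMeasurable
    have h1 := ph_cont
    have h2 := gau_cont (E := V) c
    fun_prop
  exact this.integral_prod_right'

lemma schwartz_sq_int (f : 𝓢(V, ℂ)) : Integrable (fun x => ‖f x‖ ^ 2) :=
  (memLp_two_iff_integrable_sq_norm f.continuous.aestronglyMeasurable).1 (f.memLp 2)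

lemma lint_sq {f : V → ℂ} (hf : Integrable (fun x => ‖f x‖ ^ 2)) :
    ∫⁻ x, ‖f x‖ₑ ^ 2 = ENNReal.ofReal (∫ x, ‖f x‖ ^ 2) := by
  rw [ofReal_integral_eq_lintegral_ofReal hf (Filter.Eventually.of_forall fun x => by positivity)]
  refine lintegral_congr fun x => ?_
  rw [ENNReal.ofReal_pow (norm_nonneg _), ofReal_norm]

lemma GT_planch {c : ℝ} (hc : 0 < c) (f : 𝓢(V, ℂ)) (z : V) :
    ∫⁻ ζ, ‖GT c f z ζ‖ₑ ^ 2 = ∫⁻ u, ‖(gau c u : ℂ)‖ₑ ^ 2 * ‖f (u + z)‖ₑ ^ 2 := by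
  have h1 : ∫⁻ ζ, ‖GT c f z ζ‖ₑ ^ 2 = ∫⁻ ζ, ‖(𝓕 (locS c f z)) ζ‖ₑ ^ 2 := by
    simp_rw [GT_eq hc]
  rw [h1, lint_sq (schwartz_sq_int _), SchwartzMap.integral_norm_sq_fourier,
    ← lint_sq (schwartz_sq_int _)]
  refine lintegral_congr fun u => ?_
  rw [locS_apply hc, enorm_mul, mul_pow]

lemma GT_weighted {c : ℝ} (hc : 0 < c) (f : 𝓢(V, ℂ)) (om D : V → ℝ≥0∞) (hom : Measurable om)
    (hD : Measurable D) (h : ∀ v ζ, om ζ ≤ D v * om (v + ζ)) :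
    ∫⁻ z, om z * ∫⁻ ζ, ‖GT c f z ζ‖ₑ ^ 2 ≤
      (∫⁻ v : V, D v * ‖(gau c v : ℂ)‖ₑ ^ 2) * ∫⁻ x, om x * ‖f x‖ₑ ^ 2 := by
  have mg : Measurable (fun v : V => ‖(gau c v : ℂ)‖ₑ ^ 2) := by
    have := gau_cont (E := V) c
    have h2 : Continuous (fun v : V => (gau c v : ℂ)) := by fun_prop
    exact h2.measurable.enorm.pow_const 2
  have mf : Measurable (fun v : V => ‖f v‖ₑ ^ 2) := f.continuous.measurable.enorm.pow_const 2
  calc _ = ∫⁻ z, ∫⁻ u, om z * (‖(gau c u : ℂ)‖ₑ ^ 2 * ‖f (u + z)‖ₑ ^ 2) := by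
        refine lintegral_congr fun z => ?_
        rw [GT_planch hc, lintegral_const_mul]
        exact mg.mul (mf.comp (measurable_id.add_const z))
    _ ≤ ∫⁻ z, ∫⁻ u, (D u * ‖(gau c u : ℂ)‖ₑ ^ 2) * (om (u + z) * ‖f (u + z)‖ₑ ^ 2) := by
        refine lintegral_mono fun z => lintegral_mono fun u => ?_
        calc _ ≤ (D u * om (u + z)) * (‖(gau c u : ℂ)‖ₑ ^ 2 * ‖f (u + z)‖ₑ ^ 2) := by
              gcongr; exact h u z
          _ = _ := by ring
    _ = ∫⁻ u, ∫⁻ z, (D u * ‖(gau c u : ℂ)‖ₑ ^ 2) * (om (u + z) * ‖f (u + z)‖ₑ ^ 2) := by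
        rw [lintegral_lintegral_swap]
        refine Measurable.aemeasurable ?_
        refine ((hD.comp measurable_snd).mul (mg.comp measurable_snd)).mul ?_
        exact (hom.comp (measurable_snd.add measurable_fst)).mul
          (mf.comp (measurable_snd.add measurable_fst))
    _ = ∫⁻ u, (D u * ‖(gau c u : ℂ)‖ₑ ^ 2) * ∫⁻ x, om x * ‖f x‖ₑ ^ 2 := by
        refine lintegral_congr fun u => ?_
        rw [lintegral_const_mul]
        · congr 1
          exact lintegral_add_left_eq_self (fun x => om x * ‖f x‖ₑ ^ 2) u
        · exact (hom.mul mf).comp (measurable_const.add measurable_id)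
    _ = _ := by
        rw [lintegral_mul_const]
        exact hD.mul mg

lemma fourier_gau (w : V) : 𝓕 (fun v : V => (gau Real.pi v : ℂ)) w = gau Real.pi w := by
  have h := fourier_gaussian_innerProductSpace (V := V) (b := (Real.pi : ℂ))
    (by simpa using Real.pi_pos) w
  have hp : (Real.pi : ℂ) ≠ 0 := by exact_mod_cast Real.pi_ne_zero
  rw [div_self hp, Complex.one_cpow, one_mul] at h
  have e1 : (fun v : V => (gau Real.pi v : ℂ)) = fun v : V => cexp (-(Real.pi:ℂ) * (‖v‖:ℂ) ^ 2) := by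
    funext v; simp [gau]
  rw [e1, h]
  simp only [gau]
  push_cast
  congr 1
  field_simp

lemma integral_fourier_mul {f g : V → ℂ} (hf : Integrable f) (hg : Integrable g) :
    ∫ ξ, 𝓕 f ξ * g ξ = ∫ x, f x * 𝓕 g x := by
  simpa using! VectorFourier.integral_bilin_fourierIntegral_eq_flip (ContinuousLinearMap.mul ℂ ℂ)
    (L := innerₗ V) Real.continuous_fourierChar continuous_inner hf hg

/-- Gabor transform on the Fourier side. -/
lemma GT_fourier (f : 𝓢(V, ℂ)) (z ζ : V) :
    ph ⟪z, ζ⟫ * ∫ v, ph ⟪z, v⟫ * (gau Real.pi v * (𝓕 f) (v + ζ)) = GT Real.pi f z ζ := by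
  have hgI : Integrable (fun v : V => (gau Real.pi v : ℂ)) := (gau_integrable Real.pi_pos).ofReal
  have hψ : Integrable (fun ξ : V => ph ⟪z, ξ⟫ * (gau Real.pi (ξ - ζ) : ℂ)) := by
    refine (hgI.comp_sub_right ζ).bdd_mul (c := 1) ?_ (Filter.Eventually.of_forall fun v => (ph_norm _).le)
    have := ph_cont
    exact Continuous.aestronglyMeasurable (by fun_prop)
  have h1 := integral_fourier_mul f.integrable hψ (V := V)
  have h2 : ∀ y, 𝓕 (fun ξ : V => ph ⟪z, ξ⟫ * (gau Real.pi (ξ - ζ) : ℂ)) y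
      = ph (-⟪y - z, ζ⟫) * gau Real.pi (y - z) := by
    intro y
    rw [fourier_ph, ← integral_add_right_eq_self _ ζ]
    simp only [add_sub_cancel_right]
    rw [← fourier_gau (y - z), fourier_ph, ← integral_const_mul]
    refine integral_congr_ae (Filter.Eventually.of_forall fun v => ?_)
    simp only
    rw [← mul_assoc, ← mul_assoc, ← ph_add, ← ph_add]
    congr 2
    simp only [inner_add_left, inner_add_right, inner_sub_left, inner_sub_right,
      real_inner_comm]
    ring
  calc _ = ∫ v, 𝓕 (⇑f) (v + ζ) * (ph ⟪z, v + ζ⟫ * gau Real.pi (v + ζ - ζ)) := by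
        rw [← integral_const_mul, ← SchwartzMap.fourier_coe]
        refine integral_congr_ae (Filter.Eventually.of_forall fun v => ?_)
        simp only [add_sub_cancel_right, inner_add_right, ph_add]
        ring
    _ = ∫ v, 𝓕 (⇑f) v * (ph ⟪z, v⟫ * gau Real.pi (v - ζ)) :=
        integral_add_right_eq_self (fun v => 𝓕 (⇑f) v * (ph ⟪z, v⟫ * gau Real.pi (v - ζ))) ζ
    _ = ∫ y, f y * (ph (-⟪y - z, ζ⟫) * gau Real.pi (y - z)) := by
        rw [h1]; simp_rw [h2]
    _ = ∫ u, f (u + z) * (ph (-⟪u + z - z, ζ⟫) * gau Real.pi (u + z - z)) :=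
        (integral_add_right_eq_self
          (fun y => f y * (ph (-⟪y - z, ζ⟫) * gau Real.pi (y - z))) z).symm
    _ = _ := by
        unfold GT
        refine integral_congr_ae (Filter.Eventually.of_forall fun v => ?_)
        simp only [add_sub_cancel_right]
        ring

end pln

section pair
variable {V : Type*} [NormedAddCommGroup V] [InnerProductSpace ℝ V] [FiniteDimensional ℝ V]
  [MeasurableSpace V] [BorelSpace V]

lemma toLp_emb : MeasurableEmbedding (WithLp.toLp 2 : V × V → WithLp 2 (V × V)) :=
  (MeasurableEquiv.toLp 2 (V × V)).measurableEmbedding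

lemma toLp_mp : MeasurePreserving (WithLp.toLp 2 : V × V → WithLp 2 (V × V)) :=
  WithLp.volume_preserving_toLp V V

lemma integral_W (F : WithLp 2 (V × V) → ℂ) : ∫ w, F w = ∫ q : V × V, F (WithLp.toLp 2 q) :=
  (toLp_mp.integral_comp toLp_emb F).symm

lemma inner_W (p q : V × V) : ⟪WithLp.toLp 2 p, WithLp.toLp 2 q⟫ = ⟪p.1, q.1⟫ + ⟪p.2, q.2⟫ := by
  simp [WithLp.prod_inner_apply]

lemma norm_W (p : V × V) : ‖WithLp.toLp 2 p‖ ^ 2 = ‖p.1‖ ^ 2 + ‖p.2‖ ^ 2 := by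
  simp [WithLp.prod_norm_sq_eq_of_L2]

lemma gau_W (c : ℝ) (p : V × V) : gau c (WithLp.toLp 2 p) = gau c p.1 * gau c p.2 := by
  unfold gau
  rw [norm_W, ← Real.exp_add]; congr 1; ring

lemma fourier_prod {X Y : V → ℂ} (p : V × V) :
    𝓕 (fun w : WithLp 2 (V × V) => X (WithLp.ofLp w).1 * Y (WithLp.ofLp w).2) (WithLp.toLp 2 p)
      = 𝓕 X p.1 * 𝓕 Y p.2 := by
  rw [fourier_ph, fourier_ph, fourier_ph, integral_W, ← integral_prod_mul]
  refine integral_congr_ae (Filter.Eventually.of_forall fun q => ?_)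
  simp only [inner_W]
  rw [neg_add, ph_add]
  ring

lemma pairF {b : WithLp 2 (V × V) → ℂ} (hb : Continuous b) (hbi : Integrable b)
    (hFb : Integrable (𝓕 b)) {X Y : V → ℂ} (hX : Integrable X) (hY : Integrable Y) :
    ‖∫ q : V × V, b (WithLp.toLp 2 q) * (X q.1 * Y q.2)‖ₑ ≤
      ∫⁻ q : V × V, ‖𝓕 b (-(WithLp.toLp 2 q))‖ₑ * (‖𝓕 X q.1‖ₑ * ‖𝓕 Y q.2‖ₑ) := by
  set Z : WithLp 2 (V × V) → ℂ := fun w => X (WithLp.ofLp w).1 * Y (WithLp.ofLp w).2 with hZ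
  have hZi : Integrable Z := by
    rw [← toLp_mp.integrable_comp_emb toLp_emb]
    exact hX.mul_prod hY
  have hbinv : 𝓕 (𝓕⁻ b) = b := hb.fourier_fourierInv_eq hbi hFb
  have hbi' : Integrable (𝓕⁻ b) := by
    have : 𝓕⁻ b = fun w => 𝓕 b (-w) := funext fun w => Real.fourierInv_eq_fourier_neg b w
    rw [this]; exact hFb.comp_neg
  have h1 : ∫ q : V × V, b (WithLp.toLp 2 q) * (X q.1 * Y q.2) = ∫ w, b w * Z w :=
    (integral_W (fun w => b w * Z w)).symm
  have h2 : ∫ w, b w * Z w = ∫ w, 𝓕⁻ b w * 𝓕 Z w := by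
    rw [← integral_fourier_mul hbi' hZi, hbinv]
  rw [h1, h2, integral_W]
  refine (enorm_integral_le_lintegral_enorm _).trans (lintegral_mono fun q => ?_)
  rw [enorm_mul, Real.fourierInv_eq_fourier_neg, hZ, fourier_prod, enorm_mul]

lemma fourier_integrable {E : Type*} [NormedAddCommGroup E] [InnerProductSpace ℝ E]
    [FiniteDimensional ℝ E] [MeasurableSpace E] [BorelSpace E] {b : E → ℂ} (hbi : Integrable b) {K : ℕ}
    (hK : Module.finrank ℝ E < K) {C : ℝ} (h : ∀ θ, (1 + ‖θ‖) ^ K * ‖𝓕 b θ‖ ≤ C) :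
    Integrable (𝓕 b) := by
  have hi := integrable_one_add_norm (E := E) (μ := volume) (r := K) (by exact_mod_cast hK)
  refine (hi.const_mul C).mono' ?_ (Filter.Eventually.of_forall fun θ => ?_)
  · exact (VectorFourier.fourierIntegral_continuous Real.continuous_fourierChar
      (L := innerₗ E) continuous_inner hbi).aestronglyMeasurable
  · have := h θ
    rw [Real.rpow_neg (by positivity), Real.rpow_natCast, ← div_eq_mul_inv, le_div_iff₀ (by positivity)]
    linarith

end pair

section ebd
variable {V : Type*} [NormedAddCommGroup V] [InnerProductSpace ℝ V] [FiniteDimensional ℝ V]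
  [MeasurableSpace V] [BorelSpace V]

/-- left factor -/
def XX (c : ℝ) (f : V → ℂ) (z ζ u : V) : ℂ := ph ⟪u, ζ⟫ * (gau c u * (starRingEnd ℂ) (f (u + z)))
/-- right factor -/
def YY (c : ℝ) (F : V → ℂ) (z ζ v : V) : ℂ := ph ⟪z, v⟫ * (gau c v * F (v + ζ))

lemma XX_int {c : ℝ} (hc : 0 < c) (f : 𝓢(V, ℂ)) (z ζ : V) : Integrable (XX c f z ζ) := by
  have hp := ph_cont
  have hg := gau_cont (E := V) c
  have hf := f.continuous
  refine Integrable.mono (locS c f z).integrable ?_ (Filter.Eventually.of_forall fun u => ?_)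
  · unfold XX
    exact Continuous.aestronglyMeasurable (by fun_prop)
  · rw [locS_apply hc]; simp [XX, ph_norm]

lemma YY_int {c : ℝ} (hc : 0 < c) (f : 𝓢(V, ℂ)) (z ζ : V) : Integrable (YY c f z ζ) := by
  have hp := ph_cont
  have hg := gau_cont (E := V) c
  have hf := f.continuous
  refine Integrable.mono (locS c f ζ).integrable ?_ (Filter.Eventually.of_forall fun u => ?_)
  · unfold YY
    exact Continuous.aestronglyMeasurable (by fun_prop)
  · rw [locS_apply hc]; simp [YY, ph_norm]

lemma XX_fourier (c : ℝ) (f : V → ℂ) (z ζ θ : V) :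
    𝓕 (XX c f z ζ) θ = (starRingEnd ℂ) (GT c f z (ζ - θ)) := by
  rw [fourier_ph]
  unfold GT XX
  rw [← integral_conj]
  refine integral_congr_ae (Filter.Eventually.of_forall fun u => ?_)
  simp only [map_mul, ph_conj, Complex.conj_ofReal]
  rw [← mul_assoc, ← ph_add]
  congr 2
  rw [inner_sub_right]; ring

lemma YY_fourier (c : ℝ) (f : V → ℂ) (z ζ τ : V) :
    𝓕 (YY c f z ζ) τ = GT c f ζ (τ - z) := by
  rw [fourier_ph]
  unfold GT YY
  refine integral_congr_ae (Filter.Eventually.of_forall fun u => ?_)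
  simp only
  rw [← mul_assoc, ← ph_add]
  congr 2
  rw [inner_sub_right, real_inner_comm z u]; ring

lemma XX_integral (c : ℝ) (f : V → ℂ) (z ζ : V) :
    ∫ u, XX c f z ζ u = (starRingEnd ℂ) (GT c f z ζ) := by
  have := XX_fourier c f z ζ 0
  rw [fourier_ph] at this
  simpa [ph_zero] using this

lemma YY_integral (f : 𝓢(V, ℂ)) (z ζ : V) :
    ph ⟪z, ζ⟫ * ∫ v, YY Real.pi (⇑(𝓕 f : 𝓢(V, ℂ))) z ζ v = GT Real.pi f z ζ := GT_fourier f z ζ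

lemma gau_half (u : V) : gau Real.pi u = gau (Real.pi / 2) u * gau (Real.pi / 2) u := by
  unfold gau; rw [← Real.exp_add]; congr 1; ring

lemma XXYY_half (f F : V → ℂ) (z ζ : V) (q : V × V) :
    XX Real.pi f z ζ q.1 * YY Real.pi F z ζ q.2 = gau (Real.pi / 2) (WithLp.toLp 2 q) *
      (XX (Real.pi / 2) f z ζ q.1 * YY (Real.pi / 2) F z ζ q.2) := by
  unfold XX YY
  rw [gau_W, gau_half q.1, gau_half q.2]
  push_cast; ring

lemma E_bound {ι : Type*} [Fintype ι] [Nonempty ι] (β : OrthonormalBasis ι ℝ (WithLp 2 (V × V)))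
    (K : ℕ) (hK : Module.finrank ℝ (WithLp 2 (V × V)) < K) :
    ∃ C : ℝ, 0 ≤ C ∧ ∀ A : WithLp 2 (V × V) → ℂ, ContDiff ℝ ∞ A → ∀ m : V → ℝ, (∀ ζ, 0 < m ζ) →
      (∀ v ζ, m ζ ≤ 2 * (1 + ‖v‖) ^ 2 * m (v + ζ)) →
      (∀ j, ∀ i, 1 ≤ i → i ≤ K + 1 → ∀ q : V × V, ‖((dd (β j))^[i] A) (WithLp.toLp 2 q)‖ ≤ m q.2) →
      ∀ (f F : 𝓢(V, ℂ)) (z ζ : V),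
      ‖∫ q : V × V, (A (WithLp.toLp 2 q + WithLp.toLp 2 (z, ζ)) - A (WithLp.toLp 2 (z, ζ))) *
        (XX Real.pi f z ζ q.1 * YY Real.pi F z ζ q.2)‖ₑ ≤
      ∫⁻ q : V × V, ENNReal.ofReal (C * m ζ * ((1 + ‖WithLp.toLp 2 q‖) ^ K)⁻¹) *
        (‖GT (Real.pi / 2) f z (ζ - q.1)‖ₑ * ‖GT (Real.pi / 2) F ζ (q.2 - z)‖ₑ) := by
  have hp2 : 0 < Real.pi / 2 := half_pos Real.pi_pos
  obtain ⟨C, hC, h⟩ := bloc_decay β K hp2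
  refine ⟨C * 2, by positivity, fun A hA m hm hm2 hd f F z ζ => ?_⟩
  obtain ⟨hb, hbi, hdec⟩ := h A hA (WithLp.toLp 2 (z, ζ)) (2 * m ζ) (by have := hm ζ; positivity) (by
    intro j i hi hiK w
    obtain ⟨q, rfl⟩ : ∃ q, WithLp.toLp 2 q = w := ⟨WithLp.ofLp w, rfl⟩
    rw [← WithLp.toLp_add]
    refine (hd j i hi hiK _).trans ?_
    have h1 := hm2 (-q.2) (q.2 + ζ)
    rw [neg_add_cancel_left, norm_neg] at h1
    have h2 : ‖q.2‖ ≤ ‖WithLp.toLp 2 q‖ := by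
      have := norm_W q
      nlinarith [norm_nonneg q.2, norm_nonneg (WithLp.toLp 2 q), sq_nonneg ‖q.1‖,
        abs_le_of_sq_le_sq' (a := ‖q.2‖) (b := ‖WithLp.toLp 2 q‖) (by nlinarith [sq_nonneg ‖q.1‖]) (norm_nonneg _)]
    have := (hm ζ).le
    calc m (q.2 + ζ) ≤ 2 * (1 + ‖q.2‖) ^ 2 * m ζ := h1
      _ ≤ 2 * (1 + ‖WithLp.toLp 2 q‖) ^ 2 * m ζ := by gcongr
      _ = _ := by ring)
  have hFb := fourier_integrable hbi hK hdec
  have h1 := pairF hb hbi hFb (XX_int hp2 f z ζ) (YY_int hp2 F z ζ)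
  have h2 : ∀ q : V × V, (A (WithLp.toLp 2 q + WithLp.toLp 2 (z, ζ)) - A (WithLp.toLp 2 (z, ζ))) *
        (XX Real.pi f z ζ q.1 * YY Real.pi F z ζ q.2) =
        bloc (Real.pi / 2) A (WithLp.toLp 2 (z, ζ)) (WithLp.toLp 2 q) *
        (XX (Real.pi / 2) f z ζ q.1 * YY (Real.pi / 2) F z ζ q.2) := by
    intro q; rw [XXYY_half, bloc]; ring
  simp_rw [h2]
  refine h1.trans (lintegral_mono fun q => ?_)
  rw [XX_fourier, YY_fourier, RCLike.enorm_conj]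
  gcongr
  rw [← ofReal_norm]
  apply ENNReal.ofReal_le_ofReal
  have := hdec (-(WithLp.toLp 2 q))
  rw [norm_neg] at this
  rw [← div_eq_mul_inv, le_div_iff₀ (by positivity)]
  linarith

lemma mG1 (f : V → ℂ) (hf : Continuous f) {α : Type*} [MeasurableSpace α] (g h : α → V) (hg : Measurable g)
    (hh : Measurable h) : Measurable (fun x => GT (Real.pi / 2) f (g x) (h x)) := by
  have h0 := (GT_sm (Real.pi / 2) hf).measurable
  generalize GT (Real.pi / 2) f = G at h0 ⊢
  exact h0.comp (hg.prodMk hh)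
lemma mG2 {α : Type*} [MeasurableSpace α] (g : α → ℂ) (hg : Measurable g)
    : Measurable (fun x => ‖g x‖ₑ ^ 2) := by
  exact hg.enorm.pow_const 2
lemma mGc (f : 𝓢(V, ℂ)) {α : Type*} [MeasurableSpace α] (g h : α → V) (hg : Measurable g)
    (hh : Measurable h) : Measurable (fun x => ‖GT (Real.pi / 2) f (g x) (h x)‖ₑ ^ 2) := 
  mG2 _ (mG1 f f.continuous g h hg hh)

/-- the constant-in-Tonelli estimate -/
lemma E_lint (K : ℕ) (C : ℝ) (hC : 0 ≤ C) (hK : Module.finrank ℝ (WithLp 2 (V × V)) < K) :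
    ∃ C' : ℝ≥0∞, C' ≠ ⊤ ∧ ∀ m : V → ℝ, (∀ ζ, 0 < m ζ) → Measurable m →
      (∀ v ζ, m ζ ≤ 2 * (1 + ‖v‖) ^ 2 * m (v + ζ)) → ∀ ε : ℝ, 0 < ε → ∀ f F : 𝓢(V, ℂ),
      ∫⁻ p : V × V, ∫⁻ q : V × V, ENNReal.ofReal (C * m p.2 * ((1 + ‖WithLp.toLp 2 q‖) ^ K)⁻¹) *
        (‖GT (Real.pi / 2) f p.1 (p.2 - q.1)‖ₑ * ‖GT (Real.pi / 2) F p.2 (q.2 - p.1)‖ₑ) ≤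
      C' * ((∫⁻ x, ENNReal.ofReal ε * ‖f x‖ₑ ^ 2) +
        ∫⁻ x, ENNReal.ofReal (m x ^ 2 / ε) * ‖F x‖ₑ ^ 2) := by
  have hp2 : 0 < Real.pi / 2 := half_pos Real.pi_pos
  set k : V × V → ℝ≥0∞ := fun q => ENNReal.ofReal (C * ((1 + ‖WithLp.toLp 2 q‖) ^ K)⁻¹) with hk
  have hkm : Measurable k := by
    refine ENNReal.measurable_ofReal.comp ?_
    have : Measurable (fun q : V × V => ‖WithLp.toLp 2 q‖) := toLp_emb.measurable.norm
    fun_prop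
  set c0 := ∫⁻ q, k q with hc0
  have hc0f : c0 ≠ ⊤ := by
    have hi := integrable_one_add_norm (E := WithLp 2 (V × V)) (μ := volume) (r := K)
      (by exact_mod_cast hK)
    have hi2 := ((toLp_mp.integrable_comp_emb toLp_emb).2 hi).const_mul C
    have := hi2.lintegral_lt_top
    refine ne_of_lt (lt_of_le_of_lt (lintegral_mono fun q => ?_) this)
    simp only [hk, Function.comp]
    rw [Real.rpow_neg (by positivity), Real.rpow_natCast]
  set D : V → ℝ≥0∞ := fun v => ENNReal.ofReal (4 * (1 + ‖v‖) ^ 4) with hD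
  have hDm : Measurable D := by
    refine ENNReal.measurable_ofReal.comp ?_
    fun_prop
  set c1 := ∫⁻ v : V, D v * ‖(gau (Real.pi / 2) v : ℂ)‖ₑ ^ 2 with hc1
  have hc1f : c1 ≠ ⊤ := by
    have hi := (poly_gau_integrable (E := V) Real.pi_pos 4).const_mul 4
    refine ne_of_lt (lt_of_le_of_lt (lintegral_mono fun v => ?_) hi.lintegral_lt_top)
    rw [hD, ← ofReal_norm, Complex.norm_real, Real.norm_of_nonneg (gau_pos _ _).le,
      ← ENNReal.ofReal_pow (gau_pos _ _).le, ← ENNReal.ofReal_mul (by positivity), gau_half v]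
    apply ENNReal.ofReal_le_ofReal
    apply le_of_eq; ring
  refine ⟨c0 * c1, ENNReal.mul_ne_top hc0f hc1f, fun m hm hmm hm2 ε hε f F => ?_⟩
  set a : V → ℝ≥0∞ := fun x => ENNReal.ofReal (m x ^ 2 / ε) with ha
  have ham : Measurable a := ENNReal.measurable_ofReal.comp ((hmm.pow_const 2).div_const ε)
  have B1 : ∀ θ, ∫⁻ p : V × V, ENNReal.ofReal ε * ‖GT (Real.pi / 2) f p.1 (p.2 - θ)‖ₑ ^ 2 ≤
      c1 * ∫⁻ x, ENNReal.ofReal ε * ‖f x‖ₑ ^ 2 := by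
    intro θ
    rw [Measure.volume_eq_prod, lintegral_prod]
    · refine le_trans (le_of_eq ?_) (GT_weighted hp2 f (fun _ => ENNReal.ofReal ε) D measurable_const hDm ?_)
      · refine lintegral_congr fun z => ?_
        simp only
        rw [lintegral_const_mul]
        · congr 1
          exact lintegral_sub_right_eq_self (fun ζ => ‖GT (Real.pi / 2) f z ζ‖ₑ ^ 2) θ
        · exact mGc f (fun ζ : V => z) (fun ζ : V => ζ - θ) (by fun_prop) (by fun_prop)
      · intro v ζ
        rw [hD, ← ENNReal.ofReal_mul (by positivity)]
        apply ENNReal.ofReal_le_ofReal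
        have : 1 ≤ (1 + ‖v‖) ^ 4 := one_le_pow₀ (by linarith [norm_nonneg v])
        nlinarith
    · refine Measurable.aemeasurable (Measurable.const_mul ?_ _)
      exact mGc f (fun p : V × V => p.1) (fun p : V × V => p.2 - θ) (by fun_prop) (by fun_prop)
  have B2 : ∀ τ, ∫⁻ p : V × V, a p.2 * ‖GT (Real.pi / 2) F p.2 (τ - p.1)‖ₑ ^ 2 ≤
      c1 * ∫⁻ x, a x * ‖F x‖ₑ ^ 2 := by
    intro τ
    rw [Measure.volume_eq_prod, lintegral_prod_symm]
    · refine le_trans (le_of_eq ?_) (GT_weighted hp2 F a D ham hDm ?_)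
      · refine lintegral_congr fun ζ => ?_
        simp only
        rw [lintegral_const_mul]
        · congr 1
          exact lintegral_sub_left_eq_self (fun z => ‖GT (Real.pi / 2) F ζ z‖ₑ ^ 2) τ
        · exact mGc F (fun z : V => ζ) (fun z : V => τ - z) (by fun_prop) (by fun_prop)
      · intro v ζ
        rw [hD, ha, ← ENNReal.ofReal_mul (by positivity)]
        apply ENNReal.ofReal_le_ofReal
        have h1 := hm2 v ζ
        have h2 : m ζ ^ 2 ≤ (2 * (1 + ‖v‖) ^ 2 * m (v + ζ)) ^ 2 := by
          have := (hm ζ).le; gcongr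
        rw [← mul_div_assoc]
        gcongr
        linarith
    · refine Measurable.aemeasurable (Measurable.mul (ham.comp measurable_snd) ?_)
      exact mGc F (fun p : V × V => p.2) (fun p : V × V => τ - p.1) (by fun_prop) (by fun_prop)
  have hpt : ∀ p q : V × V, ENNReal.ofReal (C * m p.2 * ((1 + ‖WithLp.toLp 2 q‖) ^ K)⁻¹) *
        (‖GT (Real.pi / 2) f p.1 (p.2 - q.1)‖ₑ * ‖GT (Real.pi / 2) F p.2 (q.2 - p.1)‖ₑ) ≤
      k q * (ENNReal.ofReal ε * ‖GT (Real.pi / 2) f p.1 (p.2 - q.1)‖ₑ ^ 2 +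
        a p.2 * ‖GT (Real.pi / 2) F p.2 (q.2 - p.1)‖ₑ ^ 2) := by
    intro p q
    have hm' := (hm p.2).le
    have e1 : C * m p.2 * ((1 + ‖WithLp.toLp 2 q‖) ^ K)⁻¹ =
      (C * ((1 + ‖WithLp.toLp 2 q‖) ^ K)⁻¹) * m p.2 := by ring
    rw [e1, ENNReal.ofReal_mul (by positivity), mul_assoc]
    gcongr
    set x := GT (Real.pi / 2) f p.1 (p.2 - q.1)
    set y := GT (Real.pi / 2) F p.2 (q.2 - p.1)
    rw [ha, ← ofReal_norm x, ← ofReal_norm y, ← ENNReal.ofReal_mul (by positivity),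
      ← ENNReal.ofReal_mul (by positivity), ← ENNReal.ofReal_pow (by positivity),
      ← ENNReal.ofReal_pow (by positivity), ← ENNReal.ofReal_mul (by positivity),
      ← ENNReal.ofReal_mul (by positivity), ← ENNReal.ofReal_add (by positivity) (by positivity)]
    apply ENNReal.ofReal_le_ofReal
    have h3 : 0 ≤ (ε * ‖x‖ - m p.2 * ‖y‖) ^ 2 / ε := by positivity
    have h4 : (ε * ‖x‖ - m p.2 * ‖y‖) ^ 2 / ε =
      ε * ‖x‖ ^ 2 + m p.2 ^ 2 / ε * ‖y‖ ^ 2 - 2 * (m p.2 * (‖x‖ * ‖y‖)) := by field_simp; ring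
    have h5 : 0 ≤ m p.2 * (‖x‖ * ‖y‖) := by positivity
    linarith
  have mI : Measurable (fun pq : (V × V) × (V × V) =>
      k pq.2 * (ENNReal.ofReal ε * ‖GT (Real.pi / 2) f pq.1.1 (pq.1.2 - pq.2.1)‖ₑ ^ 2 +
        a pq.1.2 * ‖GT (Real.pi / 2) F pq.1.2 (pq.2.2 - pq.1.1)‖ₑ ^ 2)) := by
    refine (hkm.comp measurable_snd).mul (Measurable.fun_add ?_ ?_)
    · refine Measurable.const_mul ?_ _
      exact mGc f (fun pq : (V × V) × (V × V) => pq.1.1) (fun pq : (V × V) × (V × V) => pq.1.2 - pq.2.1) (by fun_prop) (by fun_prop)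
    · refine (ham.comp (by fun_prop)).mul ?_
      exact mGc F (fun pq : (V × V) × (V × V) => pq.1.2) (fun pq : (V × V) × (V × V) => pq.2.2 - pq.1.1) (by fun_prop) (by fun_prop)
  calc _ ≤ ∫⁻ p : V × V, ∫⁻ q : V × V, k q *
        (ENNReal.ofReal ε * ‖GT (Real.pi / 2) f p.1 (p.2 - q.1)‖ₑ ^ 2 +
        a p.2 * ‖GT (Real.pi / 2) F p.2 (q.2 - p.1)‖ₑ ^ 2) :=
        lintegral_mono fun p => lintegral_mono fun q => hpt p q
    _ = ∫⁻ q : V × V, ∫⁻ p : V × V, k q *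
        (ENNReal.ofReal ε * ‖GT (Real.pi / 2) f p.1 (p.2 - q.1)‖ₑ ^ 2 +
        a p.2 * ‖GT (Real.pi / 2) F p.2 (q.2 - p.1)‖ₑ ^ 2) :=
        lintegral_lintegral_swap mI.aemeasurable
    _ ≤ ∫⁻ q : V × V, k q * (c1 * (∫⁻ x, ENNReal.ofReal ε * ‖f x‖ₑ ^ 2) +
          c1 * ∫⁻ x, a x * ‖F x‖ₑ ^ 2) := by
        refine lintegral_mono fun q => ?_
        have m1 : Measurable (fun p : V × V => ENNReal.ofReal ε * ‖GT (Real.pi / 2) f p.1 (p.2 - q.1)‖ₑ ^ 2) :=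
          Measurable.const_mul (mGc f (fun p : V × V => p.1) (fun p : V × V => p.2 - q.1) (by fun_prop) (by fun_prop)) _
        have m2 : Measurable (fun p : V × V => a p.2 * ‖GT (Real.pi / 2) F p.2 (q.2 - p.1)‖ₑ ^ 2) :=
          (ham.comp measurable_snd).mul
            (mGc F (fun p : V × V => p.2) (fun p : V × V => q.2 - p.1) (by fun_prop) (by fun_prop))
        rw [lintegral_const_mul _ (m1.fun_add m2), lintegral_add_left m1]
        gcongr
        · exact B1 _
        · exact B2 _
    _ = _ := by
        rw [lintegral_mul_const _ hkm, ← mul_add]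
        ring

end ebd

section convo
variable {G : Type*} [NormedAddCommGroup G] [MeasurableSpace G] [BorelSpace G] [SecondCountableTopology G]
  (μ : Measure G) [SFinite μ] [μ.IsAddLeftInvariant]

lemma vol_prod_inv {V : Type*} [NormedAddCommGroup V] [InnerProductSpace ℝ V] [FiniteDimensional ℝ V]
    [MeasurableSpace V] [BorelSpace V] : (volume : Measure (V × V)).IsAddLeftInvariant := by
  rw [Measure.volume_eq_prod]; infer_instance

lemma conv_int {H K : G → ℂ} (hH : Integrable H μ) (hK : Integrable K μ) :
    Integrable (fun q : G × G => H (q.2 + q.1) * K q.2) (μ.prod μ) := by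
  have h1 : Integrable (fun q : G × G => K q.1 * H q.2) (μ.prod μ) := hK.mul_prod hH
  have h2 := (measurePreserving_prod_add μ μ).integrable_comp_of_integrable h1
  have h3 := h2.swap
  refine h3.congr (Filter.Eventually.of_forall fun q => ?_)
  simp [mul_comm]

lemma conv_eq {H K : G → ℂ} (hH : Integrable H μ) (hK : Integrable K μ) :
    ∫ p, ∫ w, H (w + p) * K w ∂μ ∂μ = (∫ w, K w ∂μ) * ∫ p, H p ∂μ := by
  rw [integral_integral_swap (conv_int μ hH hK), ← integral_mul_const]
  refine integral_congr_ae (Filter.Eventually.of_forall fun w => ?_)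
  simp only
  rw [integral_mul_const, integral_add_left_eq_self H w, mul_comm]

end convo

section core
variable {V : Type*} [NormedAddCommGroup V] [InnerProductSpace ℝ V] [FiniteDimensional ℝ V]
  [MeasurableSpace V] [BorelSpace V]

/-- kernel -/
def Kk (q : V × V) : ℂ := ph (-⟪q.1, q.2⟫) * (gau Real.pi q.1 * gau Real.pi q.2)

/-- Rihaczek distribution -/
def RR (f : 𝓢(V, ℂ)) (q : V × V) : ℂ :=
  ph ⟪q.1, q.2⟫ * ((𝓕 f : 𝓢(V, ℂ)) q.2 * (starRingEnd ℂ) (f q.1))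

lemma Kk_int : Integrable (Kk : V × V → ℂ) := by
  have h1 : Integrable (fun v : V => (gau Real.pi v : ℂ)) := (gau_integrable Real.pi_pos).ofReal
  have h2 : Integrable (fun q : V × V => (gau Real.pi q.1 : ℂ) * gau Real.pi q.2) := h1.mul_prod h1
  refine h2.bdd_mul (c := 1) ?_ (Filter.Eventually.of_forall fun v => (ph_norm _).le)
  have := ph_cont
  exact Continuous.aestronglyMeasurable (by fun_prop)

lemma Kk_integral : ∃ κ : ℝ, 0 < κ ∧ ∫ q, (Kk : V × V → ℂ) q = κ := by
  have hc := gau_cont (E := V) Real.pi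
  have hsq : ∀ v : V, gau Real.pi v * gau Real.pi v = gau (2 * Real.pi) v := by
    intro v; unfold gau; rw [← Real.exp_add]; congr 1; ring
  have hI : Integrable (fun v : V => gau Real.pi v * gau Real.pi v) := by
    simp_rw [hsq]; exact gau_integrable (by positivity)
  refine ⟨∫ v : V, gau Real.pi v * gau Real.pi v, ?_, ?_⟩
  · rw [integral_pos_iff_support_of_nonneg (fun v => by have := gau_pos Real.pi v; positivity) hI]
    have : Function.support (fun v : V => gau Real.pi v * gau Real.pi v) = Set.univ := by
      ext v; simp [(gau_pos Real.pi v).ne']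
    rw [this]
    exact Measure.measure_univ_pos.2 (NeZero.ne _)
  · have hK := Kk_int (V := V)
    rw [Measure.volume_eq_prod] at hK ⊢
    rw [integral_prod _ hK, ← integral_complex_ofReal]
    refine integral_congr_ae (Filter.Eventually.of_forall fun u => ?_)
    simp only
    have := fourier_gau u
    rw [fourier_ph] at this
    push_cast
    conv_rhs => arg 1; rw [← this]
    rw [← integral_mul_const]
    refine integral_congr_ae (Filter.Eventually.of_forall fun v => ?_)
    simp only [Kk]
    rw [real_inner_comm]; ring

lemma RR_int (f : 𝓢(V, ℂ)) : Integrable (RR f) := by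
  have h1 : Integrable (fun v : V => (starRingEnd ℂ) (f v)) := by
    refine f.integrable.mono ?_ (Filter.Eventually.of_forall fun u => by simp)
    have := f.continuous
    exact Continuous.aestronglyMeasurable (by fun_prop)
  have h2 : Integrable (fun q : V × V => (starRingEnd ℂ) (f q.1) * (𝓕 f : 𝓢(V, ℂ)) q.2) :=
    h1.mul_prod (𝓕 f : 𝓢(V, ℂ)).integrable
  refine Integrable.congr (h2.bdd_mul (f := fun q : V × V => ph ⟪q.1, q.2⟫) (c := 1) ?_ (Filter.Eventually.of_forall fun v => (ph_norm _).le)) (Filter.Eventually.of_forall fun q => ?_)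
  · have := ph_cont
    exact Continuous.aestronglyMeasurable (by fun_prop)
  · simp only [RR]; ring

lemma RR_Kk (f : 𝓢(V, ℂ)) (p w : V × V) : RR f (w + p) * Kk w =
    ph ⟪p.1, p.2⟫ * (XX Real.pi f p.1 p.2 w.1 * YY Real.pi (⇑(𝓕 f : 𝓢(V, ℂ))) p.1 p.2 w.2) := by
  have e : ph ⟪w.1 + p.1, w.2 + p.2⟫ * ph (-⟪w.1, w.2⟫) =
      ph ⟪p.1, p.2⟫ * (ph ⟪w.1, p.2⟫ * ph ⟪p.1, w.2⟫) := by
    rw [← ph_add, ← ph_add, ← ph_add]; congr 1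
    simp only [inner_add_left, inner_add_right]; ring
  simp only [RR, Kk, XX, YY, Prod.fst_add, Prod.snd_add]
  linear_combination (gau Real.pi w.1 * gau Real.pi w.2 * ((𝓕 f : 𝓢(V, ℂ)) (w.2 + p.2) * (starRingEnd ℂ) (f (w.1 + p.1)))) * e

lemma core {ι : Type*} [Fintype ι] [Nonempty ι] (β : OrthonormalBasis ι ℝ (WithLp 2 (V × V)))
    (K : ℕ) (hK : Module.finrank ℝ (WithLp 2 (V × V)) < K) :
    ∃ Cn : ℝ≥0∞, Cn ≠ ⊤ ∧ ∀ A : WithLp 2 (V × V) → ℝ, ContDiff ℝ ∞ (fun w => (A w : ℂ)) →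
      (∀ w, 0 ≤ A w) → (∃ B, ∀ w, A w ≤ B) → ∀ m : V → ℝ, (∀ ζ, 0 < m ζ) → Measurable m →
      (∀ v ζ, m ζ ≤ 2 * (1 + ‖v‖) ^ 2 * m (v + ζ)) →
      (∀ j, ∀ i, 1 ≤ i → i ≤ K + 1 → ∀ q : V × V,
        ‖((dd (β j))^[i] (fun w => (A w : ℂ))) (WithLp.toLp 2 q)‖ ≤ m q.2) →
      ∀ ε : ℝ, 0 < ε → ∀ f : 𝓢(V, ℂ),
      ENNReal.ofReal (-(∫ q : V × V, (A (WithLp.toLp 2 q) : ℂ) * RR f q).re) ≤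
      Cn * ((∫⁻ x, ENNReal.ofReal ε * ‖f x‖ₑ ^ 2) +
        ∫⁻ x, ENNReal.ofReal (m x ^ 2 / ε) * ‖(𝓕 f : 𝓢(V, ℂ)) x‖ₑ ^ 2) := by
  have := vol_prod_inv (V := V)
  obtain ⟨C, hC, hE⟩ := E_bound β K hK
  obtain ⟨C', hC', hL⟩ := E_lint (V := V) K C hC hK
  obtain ⟨κ, hκ, hκe⟩ := Kk_integral (V := V)
  refine ⟨ENNReal.ofReal κ⁻¹ * C', ENNReal.mul_ne_top ENNReal.ofReal_ne_top hC',
    fun A hA hA0 ⟨B, hB⟩ m hm hmm hm2 hd ε hε f => ?_⟩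
  set F : 𝓢(V, ℂ) := 𝓕 f with hF
  have hAc : Continuous (fun q : V × V => (A (WithLp.toLp 2 q) : ℂ)) :=
    hA.continuous.comp (WithLp.prod_continuous_toLp 2 V V)
  have hAb : ∀ w, ‖(A w : ℂ)‖ ≤ B := fun w => by
    rw [Complex.norm_real, Real.norm_of_nonneg (hA0 w)]; exact hB w
  have hH : Integrable (fun q : V × V => (A (WithLp.toLp 2 q) : ℂ) * RR f q) :=
    (RR_int f).bdd_mul hAc.aestronglyMeasurable (Filter.Eventually.of_forall fun q => hAb _)
  set S := ∫ q : V × V, (A (WithLp.toLp 2 q) : ℂ) * RR f q with hS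
  set D : V × V → ℂ := fun p => ∫ w : V × V, ((A (WithLp.toLp 2 (w + p)) : ℂ) * RR f (w + p)) * Kk w with hD
  have hDS : ∫ p, D p = κ * S := by
    rw [hS, ← hκe]
    exact conv_eq (volume : Measure (V × V)) hH Kk_int
  have hDi : Integrable D := by
    have := (conv_int (volume : Measure (V × V)) hH Kk_int).integral_prod_left
    exact this
  set E : V × V → ℂ := fun p => ∫ q : V × V, ((A (WithLp.toLp 2 q + WithLp.toLp 2 p) : ℂ) - A (WithLp.toLp 2 p)) *
        (XX Real.pi f p.1 p.2 q.1 * YY Real.pi F p.1 p.2 q.2) with hEd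
  have hXY : ∀ p : V × V, Integrable (fun q : V × V => XX Real.pi f p.1 p.2 q.1 * YY Real.pi F p.1 p.2 q.2) :=
    fun p => (XX_int Real.pi_pos f p.1 p.2).mul_prod (YY_int Real.pi_pos F p.1 p.2)
  have hDe : ∀ p, D p = ((A (WithLp.toLp 2 p) * ‖GT Real.pi f p.1 p.2‖ ^ 2 : ℝ) : ℂ) + ph ⟪p.1, p.2⟫ * E p := by
    intro p
    have e1 : E p = (∫ q : V × V, (A (WithLp.toLp 2 q + WithLp.toLp 2 p) : ℂ) *
        (XX Real.pi f p.1 p.2 q.1 * YY Real.pi F p.1 p.2 q.2)) -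
        A (WithLp.toLp 2 p) * ∫ q : V × V, (XX Real.pi f p.1 p.2 q.1 * YY Real.pi F p.1 p.2 q.2) := by
      rw [← integral_const_mul, ← integral_sub]
      · refine integral_congr_ae (Filter.Eventually.of_forall fun q => ?_)
        simp only; ring
      · refine (hXY p).bdd_mul (c := B) ?_ (Filter.Eventually.of_forall fun q => hAb _)
        have : Continuous (fun q : V × V => (A (WithLp.toLp 2 (q + p)) : ℂ)) := hAc.comp (continuous_add_const p)
        exact this.aestronglyMeasurable
      · exact (hXY p).const_mul _
    have e2 : D p = ph ⟪p.1, p.2⟫ * ∫ q : V × V, (A (WithLp.toLp 2 q + WithLp.toLp 2 p) : ℂ) *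
        (XX Real.pi f p.1 p.2 q.1 * YY Real.pi F p.1 p.2 q.2) := by
      rw [hD, ← integral_const_mul]
      refine integral_congr_ae (Filter.Eventually.of_forall fun q => ?_)
      simp only
      rw [mul_assoc, RR_Kk, WithLp.toLp_add]; ring
    have e3 : ∫ q : V × V, (XX Real.pi f p.1 p.2 q.1 * YY Real.pi F p.1 p.2 q.2) =
        (starRingEnd ℂ) (GT Real.pi f p.1 p.2) * ∫ v, YY Real.pi F p.1 p.2 v := by
      rw [← XX_integral]
      exact integral_prod_mul _ _
    have e4 := YY_integral f p.1 p.2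
    rw [← hF] at e4
    have e5 : (starRingEnd ℂ) (GT Real.pi f p.1 p.2) * GT Real.pi f p.1 p.2 = ((‖GT Real.pi f p.1 p.2‖ ^ 2 : ℝ) : ℂ) := by
      rw [Complex.conj_mul']; push_cast; rfl
    rw [e1, e2, e3]
    push_cast at e5 ⊢
    rw [← e5]
    linear_combination ((A (WithLp.toLp 2 p) : ℂ)) * (starRingEnd ℂ) (GT Real.pi f p.1 p.2) * e4
  have hre : ∀ p, -(D p).re ≤ ‖E p‖ := by
    intro p
    rw [hDe p, Complex.add_re, Complex.ofReal_re]
    have h1 : 0 ≤ A (WithLp.toLp 2 p) * ‖GT Real.pi f p.1 p.2‖ ^ 2 := mul_nonneg (hA0 _) (by positivity)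
    have h2 := Complex.abs_re_le_norm (ph ⟪p.1, p.2⟫ * E p)
    rw [norm_mul, ph_norm, one_mul] at h2
    have h3 := neg_abs_le (ph ⟪p.1, p.2⟫ * E p).re
    linarith
  have hS2 : -S.re = κ⁻¹ * ∫ p, -(D p).re := by
    rw [integral_neg]
    have : ∫ p, (D p).re = (∫ p, D p).re := integral_re hDi
    rw [this, hDS, Complex.re_ofReal_mul]
    field_simp
  rw [hS2, ENNReal.ofReal_mul (by positivity), mul_assoc]
  gcongr
  calc ENNReal.ofReal (∫ p, -(D p).re) ≤ ∫⁻ p, ENNReal.ofReal (-(D p).re) := by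
        have hDr : Integrable (fun p => -(D p).re) := hDi.re.neg
        rw [integral_eq_lintegral_pos_part_sub_lintegral_neg_part hDr]
        refine le_trans (ENNReal.ofReal_le_ofReal (sub_le_self _ ENNReal.toReal_nonneg)) ?_
        exact ENNReal.ofReal_toReal_le
    _ ≤ ∫⁻ p, ‖E p‖ₑ := lintegral_mono fun p => by
        rw [← ofReal_norm]; exact ENNReal.ofReal_le_ofReal (hre p)
    _ ≤ _ := lintegral_mono fun p => hE (fun w => (A w : ℂ)) hA m hm hm2 hd f F p.1 p.2
    _ ≤ _ := hL m hm hmm hm2 ε hε f F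

end core

section symb
variable {n : ℕ}

lemma md_list (j : Fin n) (i : ℕ) (F : (Fin n → ℝ) → ℂ) (l : List (Fin n)) (hl : l.Nodup) :
    (((l.map fun a => (pd a)^[(Pi.single j i : Fin n → ℕ) a]).foldr (· ∘ ·) id) F) =
      if j ∈ l then (pd j)^[i] F else F := by
  induction l with
  | nil => simp
  | cons a l ih =>
    have hn := List.nodup_cons.1 hl
    simp only [List.map_cons, List.foldr_cons, Function.comp_apply]
    rw [ih hn.2]
    by_cases h : a = j
    · subst h
      simp [hn.1]
    · have h' : j ≠ a := fun e => h e.symm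
      simp [h, h']

lemma md_single (j : Fin n) (i : ℕ) (F : (Fin n → ℝ) → ℂ) :
    md (Pi.single j i) F = (pd j)^[i] F := by
  unfold md
  rw [md_list j i F _ (List.nodup_finRange n)]
  simp

lemma md_zero (F : (Fin n → ℝ) → ℂ) : md 0 F = F := by
  unfold md
  generalize List.finRange n = l
  induction l with
  | nil => simp
  | cons a l ih => simpa using ih

lemma mOrd_single (j : Fin n) (i : ℕ) : mOrd (Pi.single j i) = i := by
  unfold mOrd
  rw [Finset.sum_eq_single j]
  · simp
  · intro b _ hb; simp [hb]
  · simp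

lemma mOrd_zero : mOrd (0 : Fin n → ℕ) = 0 := by simp [mOrd]

lemma pd_dd (j : Fin n) : pd j = dd (Pi.single j (1 : ℝ)) := rfl

lemma wt_ge (ξ : Fin n → ℝ) : 1 ≤ wt ξ := by
  unfold wt
  have : 0 ≤ ∑ i, ξ i ^ 2 := Finset.sum_nonneg fun i _ => sq_nonneg _
  linarith

lemma dd_slice1 (F : (Fin n → ℝ) × (Fin n → ℝ) → ℂ) (hF : ContDiff ℝ ∞ F) (e x ξ : Fin n → ℝ) (i : ℕ) :
    ((dd (e, (0 : Fin n → ℝ)))^[i] F) (x, ξ) = ((dd e)^[i] (fun x' => F (x', ξ))) x := by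
  have := dd_iter_comp e (ContinuousLinearMap.inl ℝ (Fin n → ℝ) (Fin n → ℝ)) (0, ξ) hF i
  have h2 := congrFun this x
  simpa using h2.symm

lemma dd_slice2 (F : (Fin n → ℝ) × (Fin n → ℝ) → ℂ) (hF : ContDiff ℝ ∞ F) (e x ξ : Fin n → ℝ) (i : ℕ) :
    ((dd ((0 : Fin n → ℝ), e))^[i] F) (x, ξ) = ((dd e)^[i] (fun x' => F (x, x'))) ξ := by
  have := dd_iter_comp e (ContinuousLinearMap.inr ℝ (Fin n → ℝ) (Fin n → ℝ)) (x, 0) hF i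
  have h2 := congrFun this ξ
  simpa using h2.symm

lemma sym_deriv {ρ : ℝ} (hρ0 : 0 < ρ) {τ : (Fin n → ℝ) → (Fin n → ℝ) → ℂ}
    (hτ : SymbolClass 0 ρ 0 τ) (N : ℕ) : ∃ C > 0, ∀ j : Fin n, ∀ i, 1 ≤ i → i ≤ N → ∀ x ξ,
      ‖((dd (Pi.single j (1 : ℝ), (0 : Fin n → ℝ)))^[i] (fun p : (Fin n → ℝ) × (Fin n → ℝ) => τ p.1 p.2)) (x, ξ)‖ ≤ C ∧
      ‖((dd ((0 : Fin n → ℝ), Pi.single j (1 : ℝ)))^[i] (fun p : (Fin n → ℝ) × (Fin n → ℝ) => τ p.1 p.2)) (x, ξ)‖ ≤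
        C * wt ξ ^ (-(ρ / 2)) := by
  obtain ⟨hs, hb⟩ := hτ
  choose C1 hC1 h1 using fun (p : Fin n × ℕ) => hb 0 (Pi.single p.1 p.2)
  choose C2 hC2 h2 using fun (p : Fin n × ℕ) => hb (Pi.single p.1 p.2) 0
  refine ⟨1 + ∑ j : Fin n, ∑ i ∈ Finset.range (N + 1), (C1 (j, i) + C2 (j, i)), ?_, ?_⟩
  · have : 0 ≤ ∑ j : Fin n, ∑ i ∈ Finset.range (N + 1), (C1 (j, i) + C2 (j, i)) :=
      Finset.sum_nonneg fun j _ => Finset.sum_nonneg fun i _ => (add_pos (hC1 _) (hC2 _)).le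
    linarith
  intro j i hi hiN x ξ
  have hle : C1 (j, i) + C2 (j, i) ≤
      1 + ∑ j : Fin n, ∑ i ∈ Finset.range (N + 1), (C1 (j, i) + C2 (j, i)) := by
    have a1 := Finset.single_le_sum (f := fun j : Fin n => ∑ i ∈ Finset.range (N + 1), (C1 (j, i) + C2 (j, i)))
      (fun j _ => Finset.sum_nonneg fun i _ => (add_pos (hC1 _) (hC2 _)).le) (Finset.mem_univ j)
    have a2 := Finset.single_le_sum (f := fun i => (C1 (j, i) + C2 (j, i)))
      (fun i _ => (add_pos (hC1 _) (hC2 _)).le) (Finset.mem_range.2 (by omega : i < N + 1))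
    linarith
  set CC := 1 + ∑ j : Fin n, ∑ i ∈ Finset.range (N + 1), (C1 (j, i) + C2 (j, i))
  have p1 := hC1 (j, i)
  have p2 := hC2 (j, i)
  constructor
  · rw [dd_slice1 _ hs]
    have := h1 (j, i) x ξ
    simp only [mixedD, md_single, md_zero, mOrd_zero, mOrd_single] at this
    rw [pd_dd] at this
    simp at this
    linarith
  · rw [dd_slice2 _ hs]
    have := h2 (j, i) x ξ
    simp only [mixedD, md_single, md_zero, mOrd_zero, mOrd_single] at this
    rw [pd_dd] at this
    refine this.trans ?_
    have hw : wt ξ ^ ((0 - ρ * (i : ℝ) + 0 * 0) / 2) ≤ wt ξ ^ (-(ρ / 2)) := by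
      apply Real.rpow_le_rpow_of_exponent_le (wt_ge ξ)
      have : (1 : ℝ) ≤ i := by exact_mod_cast hi
      nlinarith
    have hp : 0 ≤ wt ξ ^ (-(ρ / 2)) := Real.rpow_nonneg (by linarith [wt_ge ξ]) _
    exact mul_le_mul (by linarith) hw (Real.rpow_nonneg (by linarith [wt_ge ξ]) _) (by linarith)

lemma sym_bdd {ρ : ℝ} {τ : (Fin n → ℝ) → (Fin n → ℝ) → ℂ}
    (hτ : SymbolClass 0 ρ 0 τ) : ∃ B, ∀ x ξ, ‖τ x ξ‖ ≤ B := by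
  obtain ⟨C, _, h⟩ := hτ.2 0 0
  refine ⟨C, fun x ξ => ?_⟩
  have := h x ξ
  simpa [mixedD, md_zero, mOrd_zero] using this

lemma rpw {M x y s : ℝ} (hM : 1 ≤ M) (hx : 0 < x) (hy : 0 < y) (h : y ≤ M * x) (hs : 0 ≤ s) (hs1 : s ≤ 1) :
    x ^ (-s) ≤ M * y ^ (-s) := by
  have hM0 : 0 < M := by linarith
  have h1 : y ^ s ≤ M * x ^ s := by
    calc y ^ s ≤ (M * x) ^ s := Real.rpow_le_rpow hy.le h hs
      _ = M ^ s * x ^ s := Real.mul_rpow hM0.le hx.le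
      _ ≤ M * x ^ s := by
        gcongr
        calc M ^ s ≤ M ^ (1 : ℝ) := Real.rpow_le_rpow_of_exponent_le hM hs1
          _ = M := Real.rpow_one M
  rw [Real.rpow_neg hx.le, Real.rpow_neg hy.le]
  have hx' := Real.rpow_pos_of_pos hx s
  have hy' := Real.rpow_pos_of_pos hy s
  rw [← div_eq_mul_inv, inv_eq_one_div, div_le_div_iff₀ hx' hy']
  linarith

lemma wt_smul (l : ℝ) (hl : 1 ≤ l) (ξ : Fin n → ℝ) : wt (l • ξ) ≤ l ^ 2 * wt ξ := by
  unfold wt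
  simp only [Pi.smul_apply, smul_eq_mul, mul_pow, ← Finset.mul_sum]
  nlinarith

lemma wt_smul_ge (l : ℝ) (hl : 1 ≤ l) (ξ : Fin n → ℝ) : wt ξ ≤ wt (l • ξ) := by
  unfold wt
  simp only [Pi.smul_apply, smul_eq_mul, mul_pow, ← Finset.mul_sum]
  have : 0 ≤ ∑ i, ξ i ^ 2 := Finset.sum_nonneg fun i _ => sq_nonneg _
  nlinarith [mul_nonneg (show 0 ≤ l ^ 2 - 1 by nlinarith) this]

lemma wt_norm (ξ : EuclideanSpace ℝ (Fin n)) : wt (WithLp.ofLp ξ) = 1 + ‖ξ‖ ^ 2 := by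
  rw [EuclideanSpace.real_norm_sq_eq]; rfl

lemma wt_peetre (v ζ : EuclideanSpace ℝ (Fin n)) :
    wt (WithLp.ofLp (v + ζ)) ≤ 2 * (1 + ‖v‖) ^ 2 * wt (WithLp.ofLp ζ) := by
  rw [wt_norm, wt_norm]
  have h := norm_add_le v ζ
  have h1 : ‖v + ζ‖ ^ 2 ≤ (‖v‖ + ‖ζ‖) ^ 2 := by gcongr
  have hv := norm_nonneg v
  have hz := norm_nonneg ζ
  have h2 : (1 + ‖v‖ ^ 2) * (1 + ‖ζ‖ ^ 2) ≤ (1 + ‖v‖) ^ 2 * (1 + ‖ζ‖ ^ 2) := by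
    gcongr; nlinarith
  nlinarith [sq_nonneg (‖v‖ - ‖ζ‖), mul_nonneg (sq_nonneg ‖v‖) (sq_nonneg ‖ζ‖)]

lemma wt_cont : Continuous (wt : (Fin n → ℝ) → ℝ) := by unfold wt; fun_prop

end symb

section fin
variable {n : ℕ}

/-- scaled coordinates -/
def Lsc (l : ℝ) : WithLp 2 (EuclideanSpace ℝ (Fin n) × EuclideanSpace ℝ (Fin n)) →L[ℝ]
    (Fin n → ℝ) × (Fin n → ℝ) :=
  ((l⁻¹ • (PiLp.continuousLinearEquiv 2 ℝ (fun _ : Fin n => ℝ)).toContinuousLinearMap).prodMap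
    (l • (PiLp.continuousLinearEquiv 2 ℝ (fun _ : Fin n => ℝ)).toContinuousLinearMap)).comp
    (WithLp.prodContinuousLinearEquiv 2 ℝ (EuclideanSpace ℝ (Fin n)) (EuclideanSpace ℝ (Fin n))).toContinuousLinearMap

lemma Lsc_apply (l : ℝ) (q : EuclideanSpace ℝ (Fin n) × EuclideanSpace ℝ (Fin n)) :
    Lsc l (WithLp.toLp 2 q) = (l⁻¹ • WithLp.ofLp q.1, l • WithLp.ofLp q.2) := rfl

/-- basis -/
def bas (n : ℕ) : OrthonormalBasis (Fin n ⊕ Fin n) ℝ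
    (WithLp 2 (EuclideanSpace ℝ (Fin n) × EuclideanSpace ℝ (Fin n))) :=
  (EuclideanSpace.basisFun (Fin n) ℝ).prod (EuclideanSpace.basisFun (Fin n) ℝ)

lemma Lsc_bas_inl (l : ℝ) (j : Fin n) : Lsc l (bas n (Sum.inl j)) =
    l⁻¹ • ((Pi.single j (1 : ℝ) : Fin n → ℝ), (0 : Fin n → ℝ)) := by
  simp [bas, Lsc_apply]

lemma Lsc_bas_inr (l : ℝ) (j : Fin n) : Lsc l (bas n (Sum.inr j)) =
    l • ((0 : Fin n → ℝ), (Pi.single j (1 : ℝ) : Fin n → ℝ)) := by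
  simp [bas, Lsc_apply]

/-- derivative bounds of the scaled symbol. -/
lemma scaled_deriv {ρ : ℝ} (hρ0 : 0 < ρ) {σ : (Fin n → ℝ) → (Fin n → ℝ) → ℝ}
    (hσ : SymbolClass 0 ρ 0 (fun x ξ => ((σ x ξ : ℝ) : ℂ))) (N : ℕ) (c₀ ε : ℝ) (hε : 0 < ε) :
    ∃ l : ℝ, 1 ≤ l ∧ ∃ C0 > 0, ∀ j, ∀ i, 1 ≤ i → i ≤ N →
      ∀ q : EuclideanSpace ℝ (Fin n) × EuclideanSpace ℝ (Fin n),
      ‖((dd (bas n j))^[i] (fun w => ((σ (Lsc l w).1 (Lsc l w).2 - c₀ : ℝ) : ℂ))) (WithLp.toLp 2 q)‖ ≤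
        ε + C0 * wt (WithLp.ofLp q.2) ^ (-(ρ / 4)) := by
  obtain ⟨C, hC, h⟩ := sym_deriv hρ0 hσ N
  have hs : ContDiff ℝ ∞ (fun p : (Fin n → ℝ) × (Fin n → ℝ) => ((σ p.1 p.2 : ℝ) : ℂ)) := hσ.1
  set l := max 1 (C / ε) with hl
  have hl1 : 1 ≤ l := le_max_left _ _
  have hl2 : C / ε ≤ l := le_max_right _ _
  have hl0 : 0 < l := by linarith
  have hCl : l⁻¹ * C ≤ ε := by
    rw [div_le_iff₀ hε] at hl2
    rw [inv_mul_le_iff₀ hl0]; exact hl2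
  refine ⟨l, hl1, l ^ N * C, by positivity, fun j i hi hiN q => ?_⟩
  have e0 : (fun w => ((σ (Lsc l w).1 (Lsc l w).2 - c₀ : ℝ) : ℂ)) =
    fun w => (fun w => (fun p : (Fin n → ℝ) × (Fin n → ℝ) => ((σ p.1 p.2 : ℝ) : ℂ)) (Lsc l w + 0)) w - (c₀ : ℂ) := by
    funext w; simp
  rw [e0, dd_iter_sub_const _ _ _ _ hi, dd_iter_comp _ (Lsc l) 0 hs]
  have hwp : 0 < wt (WithLp.ofLp q.2) := by linarith [wt_ge (WithLp.ofLp q.2)]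
  have hwp2 := Real.rpow_pos_of_pos hwp (-(ρ / 4))
  rcases j with j | j
  · simp only
    rw [Lsc_bas_inl, dd_iter_smul _ _ hs, add_zero, Lsc_apply]
    have := (h j i hi hiN (l⁻¹ • WithLp.ofLp q.1) (l • WithLp.ofLp q.2)).1
    simp only
    rw [norm_mul, norm_pow, Complex.norm_real, Real.norm_of_nonneg (by positivity)]
    have h3 : (l⁻¹) ^ i ≤ l⁻¹ := by
      calc (l⁻¹) ^ i ≤ (l⁻¹) ^ 1 := pow_le_pow_of_le_one (by positivity) (inv_le_one_of_one_le₀ hl1) hi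
        _ = l⁻¹ := pow_one _
    have h4 : l⁻¹ ^ i * ‖((dd (Pi.single j (1 : ℝ), (0 : Fin n → ℝ)))^[i] (fun p : (Fin n → ℝ) × (Fin n → ℝ) => ((σ p.1 p.2 : ℝ) : ℂ))) (l⁻¹ • WithLp.ofLp q.1, l • WithLp.ofLp q.2)‖ ≤ l⁻¹ * C := by gcongr
    have : 0 ≤ l ^ N * C * wt (WithLp.ofLp q.2) ^ (-(ρ / 4)) := by positivity
    linarith
  · simp only
    rw [Lsc_bas_inr, dd_iter_smul _ _ hs, add_zero, Lsc_apply]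
    have := (h j i hi hiN (l⁻¹ • WithLp.ofLp q.1) (l • WithLp.ofLp q.2)).2
    simp only
    rw [norm_mul, norm_pow, Complex.norm_real, Real.norm_of_nonneg (by positivity)]
    have h3 : l ^ i ≤ l ^ N := pow_le_pow_right₀ hl1 hiN
    have h5 : wt (l • WithLp.ofLp q.2) ^ (-(ρ / 2)) ≤ wt (WithLp.ofLp q.2) ^ (-(ρ / 4)) := by
      calc wt (l • WithLp.ofLp q.2) ^ (-(ρ / 2)) ≤ wt (WithLp.ofLp q.2) ^ (-(ρ / 2)) :=
            Real.rpow_le_rpow_of_nonpos hwp (wt_smul_ge l hl1 _) (by linarith)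
        _ ≤ _ := Real.rpow_le_rpow_of_exponent_le (wt_ge _) (by linarith)
    have h4 : l ^ i * ‖((dd ((0 : Fin n → ℝ), Pi.single j (1 : ℝ)))^[i] (fun p : (Fin n → ℝ) × (Fin n → ℝ) => ((σ p.1 p.2 : ℝ) : ℂ))) (l⁻¹ • WithLp.ofLp q.1, l • WithLp.ofLp q.2)‖ ≤ l ^ N * (C * wt (WithLp.ofLp q.2) ^ (-(ρ / 4))) := by
      gcongr
      exact this.trans (by gcongr)
    linarith

end fin

section scal
variable {n : ℕ}

lemma integral_sc (G : (Fin n → ℝ) → ℂ) {c : ℝ} (hc : 0 < c) :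
    ∫ x : EuclideanSpace ℝ (Fin n), G (c • WithLp.ofLp x) = ((c ^ n)⁻¹ : ℝ) * ∫ x, G x := by
  have h1 := (EuclideanSpace.volume_preserving_symm_measurableEquiv_toLp (Fin n)).integral_comp
    (MeasurableEquiv.measurableEmbedding _) (fun y => G (c • y))
  have h2 := Measure.integral_comp_smul (volume : Measure (Fin n → ℝ)) G c
  rw [Module.finrank_fin_fun, abs_of_pos (by positivity)] at h2
  rw [← Complex.real_smul, ← h2, ← h1]
  rfl

lemma integral_sc_real (G : (Fin n → ℝ) → ℝ) {c : ℝ} (hc : 0 < c) :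
    ∫ x : EuclideanSpace ℝ (Fin n), G (c • WithLp.ofLp x) = (c ^ n)⁻¹ * ∫ x, G x := by
  have h1 := (EuclideanSpace.volume_preserving_symm_measurableEquiv_toLp (Fin n)).integral_comp
    (MeasurableEquiv.measurableEmbedding _) (fun y => G (c • y))
  have h2 := Measure.integral_comp_smul (volume : Measure (Fin n → ℝ)) G c
  rw [Module.finrank_fin_fun, abs_of_pos (by positivity)] at h2
  rw [← smul_eq_mul, ← h2, ← h1]
  rfl

/-- scaled linear equivalence -/
def Leq (c : ℝ) (hc : 0 < c) : EuclideanSpace ℝ (Fin n) ≃L[ℝ] (Fin n → ℝ) :=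
  (PiLp.continuousLinearEquiv 2 ℝ (fun _ : Fin n => ℝ)).trans
    (LinearEquiv.smulOfNeZero ℝ (Fin n → ℝ) c hc.ne').toContinuousLinearEquiv

/-- scaled function -/
def sca (c : ℝ) (hc : 0 < c) (f : 𝓢(Fin n → ℝ, ℂ)) : 𝓢(EuclideanSpace ℝ (Fin n), ℂ) :=
  SchwartzMap.compCLMOfContinuousLinearEquiv ℂ (Leq c hc) f

lemma sca_apply (c : ℝ) (hc : 0 < c) (f : 𝓢(Fin n → ℝ, ℂ)) (x : EuclideanSpace ℝ (Fin n)) :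
    sca c hc f x = f (c • WithLp.ofLp x) := rfl

lemma expi_ph (t : ℝ) : expi t = ph t := by
  unfold expi ph; congr 1; push_cast; ring

lemma inner_dotp (x y : EuclideanSpace ℝ (Fin n)) : ⟪x, y⟫ = dotp (WithLp.ofLp x) (WithLp.ofLp y) := by
  rw [PiLp.inner_apply]; unfold dotp
  refine Finset.sum_congr rfl fun i _ => ?_
  simp [mul_comm]

lemma dotp_smul (l : ℝ) (hl : 0 < l) (x y : Fin n → ℝ) : dotp (l⁻¹ • x) (l • y) = dotp x y := by
  unfold dotp
  refine Finset.sum_congr rfl fun i _ => ?_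
  simp only [Pi.smul_apply, smul_eq_mul]
  field_simp

lemma sca_fourier (l : ℝ) (hl : 0 < l) (f : 𝓢(Fin n → ℝ, ℂ)) (ξ : EuclideanSpace ℝ (Fin n)) :
    (𝓕 (sca l⁻¹ (inv_pos.2 hl) f) : 𝓢(EuclideanSpace ℝ (Fin n), ℂ)) ξ =
      ((l ^ n : ℝ) : ℂ) * FT f (l • WithLp.ofLp ξ) := by
  rw [SchwartzMap.fourier_coe, fourier_ph]
  have := integral_sc (fun y => f y * expi (-(dotp y (l • WithLp.ofLp ξ)))) (inv_pos.2 hl)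
  unfold FT
  rw [inv_pow, inv_inv] at this
  rw [← this]
  refine integral_congr_ae (Filter.Eventually.of_forall fun y => ?_)
  simp only
  rw [sca_apply, dotp_smul l hl, expi_ph, inner_dotp, mul_comm]

lemma sca_norm (l : ℝ) (hl : 0 < l) (f : 𝓢(Fin n → ℝ, ℂ)) :
    ∫ x, ‖sca l⁻¹ (inv_pos.2 hl) f x‖ ^ 2 = l ^ n * ∫ x, ‖f x‖ ^ 2 := by
  have := integral_sc_real (fun y => ‖f y‖ ^ 2) (inv_pos.2 hl)
  rw [inv_pow, inv_inv] at this
  rw [← this]; rfl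

lemma FT_cont (f : 𝓢(Fin n → ℝ, ℂ)) : Continuous (FT (⇑f)) := by
  have h : FT (⇑f) = fun ξ => (𝓕 (sca 1⁻¹ (inv_pos.2 one_pos) f) : 𝓢(EuclideanSpace ℝ (Fin n), ℂ)) (WithLp.toLp 2 ξ) := by
    funext ξ
    rw [sca_fourier 1 one_pos]; simp
  rw [h]
  exact (SchwartzMap.continuous _).comp (PiLp.continuous_toLp 2 _)

lemma N_int {ρ : ℝ} (hρ0 : 0 < ρ) (g : 𝓢(EuclideanSpace ℝ (Fin n), ℂ)) :
    Integrable (fun ξ => wt (WithLp.ofLp ξ) ^ (-(ρ / 2)) * ‖g ξ‖ ^ 2) := by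
  refine (schwartz_sq_int g).bdd_mul (c := 1) ?_ (Filter.Eventually.of_forall fun ξ => ?_)
  · refine Continuous.aestronglyMeasurable ?_
    refine Continuous.rpow_const (wt_cont.comp (PiLp.continuous_ofLp 2 _)) fun ξ => Or.inl ?_
    have := wt_ge (WithLp.ofLp ξ)
    exact (by linarith : (0:ℝ) < wt (WithLp.ofLp ξ)).ne'
  · have := wt_ge (WithLp.ofLp ξ)
    rw [Real.norm_of_nonneg (Real.rpow_nonneg (by linarith) _)]
    exact Real.rpow_le_one_of_one_le_of_nonpos this (by linarith)

lemma sca_sob {ρ : ℝ} (hρ0 : 0 < ρ) (hρ : ρ ≤ 1) (l : ℝ) (hl1 : 1 ≤ l) (hl : 0 < l) (f : 𝓢(Fin n → ℝ, ℂ)) :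
    ∫ ξ, wt (WithLp.ofLp ξ) ^ (-(ρ / 2)) * ‖(𝓕 (sca l⁻¹ (inv_pos.2 hl) f) : 𝓢(EuclideanSpace ℝ (Fin n), ℂ)) ξ‖ ^ 2
      ≤ l ^ n * (l ^ 2 * sobSq (-ρ / 2) f) := by
  have e := integral_sc_real (fun ξ => wt ξ ^ (-ρ / 2) * ‖FT f ξ‖ ^ 2) hl
  have hi := N_int hρ0 (𝓕 (sca l⁻¹ (inv_pos.2 hl) f) : 𝓢(EuclideanSpace ℝ (Fin n), ℂ))
  have e2 : l ^ n * (l ^ 2 * sobSq (-ρ / 2) f) = ∫ ξ : EuclideanSpace ℝ (Fin n),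
      (l ^ 2 * (l ^ n) ^ 2) * (wt (l • WithLp.ofLp ξ) ^ (-ρ / 2) * ‖FT f (l • WithLp.ofLp ξ)‖ ^ 2) := by
    rw [integral_const_mul, e]
    unfold sobSq
    field_simp
  rw [e2]
  have hpt : ∀ ξ : EuclideanSpace ℝ (Fin n), ‖(𝓕 (sca l⁻¹ (inv_pos.2 hl) f) : 𝓢(EuclideanSpace ℝ (Fin n), ℂ)) ξ‖ ^ 2 =
      (l ^ n) ^ 2 * ‖FT f (l • WithLp.ofLp ξ)‖ ^ 2 := by
    intro ξ
    rw [sca_fourier l hl f ξ, norm_mul, Complex.norm_real, Real.norm_of_nonneg (by positivity), mul_pow]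
  have hw0 : ∀ ξ : Fin n → ℝ, 0 < wt ξ := fun ξ => by linarith [wt_ge ξ]
  refine integral_mono hi ?_ fun ξ => ?_
  · have hi2 := hi.const_mul (l ^ 2)
    refine hi2.mono' ?_ (Filter.Eventually.of_forall fun ξ => ?_)
    · refine Continuous.aestronglyMeasurable ?_
      have h1 : Continuous (fun ξ : EuclideanSpace ℝ (Fin n) => l • WithLp.ofLp ξ) :=
        (PiLp.continuous_ofLp 2 _).const_smul l
      have h2 := (FT_cont f).comp h1
      have h3 : Continuous (fun ξ : EuclideanSpace ℝ (Fin n) => wt (l • WithLp.ofLp ξ) ^ (-ρ / 2)) :=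
        Continuous.rpow_const (wt_cont.comp h1) fun ξ => Or.inl (hw0 _).ne'
      exact continuous_const.mul (h3.mul (h2.norm.pow 2))
    · rw [hpt]
      have h1 := Real.rpow_pos_of_pos (hw0 (l • WithLp.ofLp ξ)) (-ρ / 2)
      rw [Real.norm_of_nonneg (by positivity)]
      have h2 : wt (l • WithLp.ofLp ξ) ^ (-ρ / 2) ≤ wt (WithLp.ofLp ξ) ^ (-(ρ / 2)) := by
        rw [neg_div]
        exact Real.rpow_le_rpow_of_nonpos (hw0 _) (wt_smul_ge l hl1 _) (by linarith)
      calc _ ≤ (l ^ 2 * (l ^ n) ^ 2) * (wt (WithLp.ofLp ξ) ^ (-(ρ / 2)) * ‖FT f (l • WithLp.ofLp ξ)‖ ^ 2) := by gcongr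
        _ = _ := by ring
  · simp only
    rw [hpt]
    have h2 := rpw (M := l ^ 2) (s := ρ / 2) (by nlinarith) (hw0 (WithLp.ofLp ξ)) (hw0 (l • WithLp.ofLp ξ))
      (wt_smul l hl1 _) (by linarith) (by linarith)
    rw [neg_div]
    calc _ ≤ (l ^ 2 * wt (l • WithLp.ofLp ξ) ^ (-(ρ / 2))) * ((l ^ n) ^ 2 * ‖FT f (l • WithLp.ofLp ξ)‖ ^ 2) := by gcongr
      _ = _ := by ring

lemma RR_bdd_int (g : 𝓢(EuclideanSpace ℝ (Fin n), ℂ)) {a : EuclideanSpace ℝ (Fin n) × EuclideanSpace ℝ (Fin n) → ℂ}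
    (ha : Continuous a) {B : ℝ} (hB : ∀ q, ‖a q‖ ≤ B) : Integrable (fun q => a q * RR g q) :=
  (RR_int g).bdd_mul ha.aestronglyMeasurable (Filter.Eventually.of_forall fun q => hB q)

lemma RR_integral (g : 𝓢(EuclideanSpace ℝ (Fin n), ℂ)) : ∫ q, RR g q = ((∫ x, ‖g x‖ ^ 2 : ℝ) : ℂ) := by
  have hi := RR_int g
  rw [Measure.volume_eq_prod] at hi ⊢
  rw [integral_prod _ hi, ← integral_complex_ofReal]
  refine integral_congr_ae (Filter.Eventually.of_forall fun x => ?_)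
  simp only [RR]
  have h1 : ∫ ξ, ph ⟪x, ξ⟫ * (𝓕 g : 𝓢(EuclideanSpace ℝ (Fin n), ℂ)) ξ = g x := by
    have h2 : (𝓕⁻ (𝓕 g) : 𝓢(EuclideanSpace ℝ (Fin n), ℂ)) x = g x := by
      rw [FourierTransform.fourierInv_fourier_eq]
    rw [← h2, SchwartzMap.fourierInv_coe, Real.fourierInv_eq']
    refine integral_congr_ae (Filter.Eventually.of_forall fun ξ => ?_)
    simp only [smul_eq_mul]
    rw [real_inner_comm]
    unfold ph
    push_cast
    rfl
  simp_rw [← mul_assoc]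
  rw [integral_mul_const, h1, Complex.mul_conj']
  push_cast; rfl

lemma sca_op {σ : (Fin n → ℝ) → (Fin n → ℝ) → ℝ} (l : ℝ) (hl : 0 < l)
    (hc : Continuous (fun p : (Fin n → ℝ) × (Fin n → ℝ) => ((σ p.1 p.2 : ℝ) : ℂ)))
    {B : ℝ} (hB : ∀ x ξ, ‖((σ x ξ : ℝ) : ℂ)‖ ≤ B) (f : 𝓢(Fin n → ℝ, ℂ)) :
    ∫ q : EuclideanSpace ℝ (Fin n) × EuclideanSpace ℝ (Fin n),
      ((σ (Lsc l (WithLp.toLp 2 q)).1 (Lsc l (WithLp.toLp 2 q)).2 : ℝ) : ℂ) * RR (sca l⁻¹ (inv_pos.2 hl) f) q =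
    ((l ^ n : ℝ) : ℂ) * ∫ x, OpKN (fun x ξ => ((σ x ξ : ℝ) : ℂ)) (⇑f) x * (starRingEnd ℂ) (f x) := by
  have hcc : Continuous (fun q : EuclideanSpace ℝ (Fin n) × EuclideanSpace ℝ (Fin n) =>
      ((σ (Lsc l (WithLp.toLp 2 q)).1 (Lsc l (WithLp.toLp 2 q)).2 : ℝ) : ℂ)) :=
    hc.comp ((Lsc l).continuous.comp (WithLp.prod_continuous_toLp 2 _ _))
  have hi := RR_bdd_int (sca l⁻¹ (inv_pos.2 hl) f) hcc (fun q => hB _ _)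
  rw [Measure.volume_eq_prod] at hi ⊢
  rw [integral_prod _ hi]
  have e1 := integral_sc (fun x => OpKN (fun x ξ => ((σ x ξ : ℝ) : ℂ)) (⇑f) x * (starRingEnd ℂ) (f x)) (inv_pos.2 hl)
  rw [inv_pow, inv_inv] at e1
  rw [← e1]
  refine integral_congr_ae (Filter.Eventually.of_forall fun x => ?_)
  simp only [Lsc_apply]
  have e2 := integral_sc (fun ξ => expi (dotp (l⁻¹ • WithLp.ofLp x) ξ) * ((σ (l⁻¹ • WithLp.ofLp x) ξ : ℝ) : ℂ) * FT f ξ) hl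
  have e3 : OpKN (fun x ξ => ((σ x ξ : ℝ) : ℂ)) (⇑f) (l⁻¹ • WithLp.ofLp x) = ((l ^ n : ℝ) : ℂ) *
      ∫ ξ : EuclideanSpace ℝ (Fin n), expi (dotp (l⁻¹ • WithLp.ofLp x) (l • WithLp.ofLp ξ)) * ((σ (l⁻¹ • WithLp.ofLp x) (l • WithLp.ofLp ξ) : ℝ) : ℂ) * FT f (l • WithLp.ofLp ξ) := by
    rw [e2]
    unfold OpKN
    have : ((l ^ n : ℝ) : ℂ) ≠ 0 := by exact_mod_cast (by positivity : l ^ n ≠ 0)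
    rw [← mul_assoc, ← Complex.ofReal_mul, mul_inv_cancel₀ (by positivity)]
    simp
  rw [e3, ← integral_const_mul, ← integral_mul_const]
  refine integral_congr_ae (Filter.Eventually.of_forall fun ξ => ?_)
  simp only [RR]
  rw [sca_fourier l hl, sca_apply, dotp_smul l hl, expi_ph, inner_dotp]
  ring

end scal

lemma wlint {n : ℕ} {ρ : ℝ} (hρ0 : 0 < ρ) {ε C0 : ℝ} (hε : 0 < ε) (hC0 : 0 < C0)
    (g : 𝓢(EuclideanSpace ℝ (Fin n), ℂ)) :
    ∫⁻ x : EuclideanSpace ℝ (Fin n), ENNReal.ofReal ((ε + C0 * wt (WithLp.ofLp x) ^ (-(ρ / 4))) ^ 2 / ε) *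
        ‖(𝓕 g : 𝓢(EuclideanSpace ℝ (Fin n), ℂ)) x‖ₑ ^ 2 ≤
      ENNReal.ofReal (2 * ε * (∫ x, ‖g x‖ ^ 2) + 2 * C0 ^ 2 / ε *
        ∫ ξ, wt (WithLp.ofLp ξ) ^ (-(ρ / 2)) * ‖(𝓕 g : 𝓢(EuclideanSpace ℝ (Fin n), ℂ)) ξ‖ ^ 2) := by
  set F : 𝓢(EuclideanSpace ℝ (Fin n), ℂ) := 𝓕 g with hF
  have hN := (N_int hρ0 F).const_mul (2 * C0 ^ 2 / ε)
  have hS := (schwartz_sq_int F).const_mul (2 * ε)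
  have hpl : ∫ x, ‖g x‖ ^ 2 = ∫ x, ‖F x‖ ^ 2 := (SchwartzMap.integral_norm_sq_fourier g).symm
  rw [hpl, ← integral_const_mul, ← integral_const_mul, ← integral_add hS hN,
    ofReal_integral_eq_lintegral_ofReal (hS.fun_add hN)]
  · refine lintegral_mono fun x => ?_
    simp only
    rw [← ofReal_norm, ← ENNReal.ofReal_pow (norm_nonneg _), ← ENNReal.ofReal_mul (by positivity)]
    apply ENNReal.ofReal_le_ofReal
    have hw : 0 < wt (WithLp.ofLp x) := by linarith [wt_ge (WithLp.ofLp x)]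
    have h1 : wt (WithLp.ofLp x) ^ (-(ρ / 2)) = (wt (WithLp.ofLp x) ^ (-(ρ / 4))) ^ 2 := by
      rw [← Real.rpow_natCast, ← Real.rpow_mul hw.le]; congr 1; push_cast; ring
    rw [h1]
    set y := wt (WithLp.ofLp x) ^ (-(ρ / 4))
    have h2 : (ε + C0 * y) ^ 2 / ε ≤ 2 * ε + 2 * C0 ^ 2 / ε * y ^ 2 := by
      have : 2 * ε + 2 * C0 ^ 2 / ε * y ^ 2 = (2 * ε ^ 2 + 2 * (C0 * y) ^ 2) / ε := by
        field_simp
      rw [this]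
      gcongr
      nlinarith [sq_nonneg (ε - C0 * y)]
    calc _ ≤ (2 * ε + 2 * C0 ^ 2 / ε * y ^ 2) * ‖F x‖ ^ 2 := by gcongr
      _ = _ := by ring
  · refine Filter.Eventually.of_forall fun x => ?_
    have hw : 0 < wt (WithLp.ofLp x) := by linarith [wt_ge (WithLp.ofLp x)]
    have := Real.rpow_pos_of_pos hw (-(ρ / 2))
    simp only [Pi.zero_apply]
    positivity

theorem gmain (n : ℕ) (hn : 1 ≤ n)
    (ρ : ℝ) (hρ : ρ ≤ 1) (hρ0 : 0 < ρ)
    (σ : (Fin n → ℝ) → (Fin n → ℝ) → ℝ)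
    (hσ : SymbolClass 0 ρ 0 (fun x ξ => ((σ x ξ : ℝ) : ℂ)))
    (c₀ : ℝ) (hc₀ : 0 < c₀)
    (hell : ∀ x ξ, c₀ ≤ σ x ξ) :
    ∃ c > 0, ∃ C > 0, ∀ f : SchwartzMap (Fin n → ℝ) ℂ,
      c * (∫ x, ‖f x‖ ^ 2) - C * sobSq (-ρ / 2) (⇑f)
        ≤ (∫ x, OpKN (fun x ξ => ((σ x ξ : ℝ) : ℂ)) (⇑f) x
            * (starRingEnd ℂ) (f x)).re := by
  have : Nonempty (Fin n ⊕ Fin n) := ⟨Sum.inl ⟨0, hn⟩⟩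
  set K := Module.finrank ℝ (WithLp 2 (EuclideanSpace ℝ (Fin n) × EuclideanSpace ℝ (Fin n))) + 1 with hK
  obtain ⟨Cn, hCn, hcore⟩ := core (bas n) K (by omega)
  set Cr := Cn.toReal with hCr
  have hCr0 : 0 ≤ Cr := ENNReal.toReal_nonneg
  set ε := c₀ / (6 * (Cr + 1)) with hεd
  have hε : 0 < ε := by positivity
  have hε2 : Cr * (3 * ε) ≤ c₀ / 2 := by
    have : (Cr + 1) * (3 * ε) = c₀ / 2 := by rw [hεd]; field_simp; ring
    nlinarith
  obtain ⟨l, hl1, C0, hC0, hder⟩ := scaled_deriv hρ0 hσ (K + 1) c₀ ε hε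
  obtain ⟨B, hB⟩ := sym_bdd hσ
  have hl : 0 < l := by linarith
  have hs : ContDiff ℝ (⊤ : ℕ∞) (fun p : (Fin n → ℝ) × (Fin n → ℝ) => ((σ p.1 p.2 : ℝ) : ℂ)) := hσ.1
  have hw0 : ∀ ξ : Fin n → ℝ, 0 < wt ξ := fun ξ => by linarith [wt_ge ξ]
  set A : WithLp 2 (EuclideanSpace ℝ (Fin n) × EuclideanSpace ℝ (Fin n)) → ℝ :=
    fun w => σ (Lsc l w).1 (Lsc l w).2 - c₀ with hA
  set m : EuclideanSpace ℝ (Fin n) → ℝ := fun x => ε + C0 * wt (WithLp.ofLp x) ^ (-(ρ / 4)) with hm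
  have hAs : ContDiff ℝ (⊤ : ℕ∞) (fun w => (A w : ℂ)) := by
    have h1 := hs.comp (Lsc (n := n) l).contDiff
    have h2 := h1.sub (contDiff_const (c := (c₀ : ℂ)))
    have e : (fun w => (A w : ℂ)) = fun w => ((fun p : (Fin n → ℝ) × (Fin n → ℝ) => ((σ p.1 p.2 : ℝ) : ℂ)) ∘ (Lsc l)) w - (c₀ : ℂ) := by
      funext w; simp [hA]
    rw [e]; exact h2
  have hmm : Measurable m := by
    have : Continuous m := by
      refine continuous_const.add (continuous_const.mul ?_)
      exact Continuous.rpow_const (wt_cont.comp (PiLp.continuous_ofLp 2 _)) fun ξ => Or.inl (hw0 _).ne'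
    exact this.measurable
  have hm0 : ∀ ζ, 0 < m ζ := fun ζ => by
    have := Real.rpow_pos_of_pos (hw0 (WithLp.ofLp ζ)) (-(ρ / 4))
    simp only [hm]; positivity
  have hm2 : ∀ v ζ, m ζ ≤ 2 * (1 + ‖v‖) ^ 2 * m (v + ζ) := by
    intro v ζ
    have hM : 1 ≤ 2 * (1 + ‖v‖) ^ 2 := by nlinarith [norm_nonneg v]
    have h1 := rpw (s := ρ / 4) hM (hw0 _) (hw0 _) (wt_peetre v ζ) (by linarith) (by linarith)
    simp only [hm]
    have h2 := mul_le_mul_of_nonneg_left h1 hC0.le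
    have h3 : ε ≤ 2 * (1 + ‖v‖) ^ 2 * ε := le_mul_of_one_le_left hε.le hM
    linarith
  refine ⟨c₀ / 2, by positivity, Cr * (2 * C0 ^ 2 / ε) * l ^ 2 + 1, by positivity, fun f => ?_⟩
  set g := sca l⁻¹ (inv_pos.2 hl) f with hg
  have hmain := hcore A hAs (fun w => sub_nonneg.2 (hell _ _))
    ⟨B, fun w => by
      have h1 := hB (Lsc l w).1 (Lsc l w).2
      rw [Complex.norm_real] at h1
      have h2 := Real.le_norm_self (σ (Lsc l w).1 (Lsc l w).2)
      simp only [hA]; linarith⟩ m hm0 hmm hm2 (fun j i hi hi2 q => hder j i hi hi2 q) ε hε g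
  set P := ∫ x, ‖g x‖ ^ 2 with hP
  set Q := ∫ ξ, wt (WithLp.ofLp ξ) ^ (-(ρ / 2)) *
    ‖(FourierTransform.fourier g : SchwartzMap (EuclideanSpace ℝ (Fin n)) ℂ) ξ‖ ^ 2 with hQ
  have hP0 : 0 ≤ P := integral_nonneg fun x => by positivity
  have hQ0 : 0 ≤ Q := integral_nonneg fun x => mul_nonneg (Real.rpow_nonneg (hw0 _).le _) (by positivity)
  have hb1 : ∫⁻ x, ENNReal.ofReal ε * ‖g x‖ₑ ^ 2 = ENNReal.ofReal (ε * P) := by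
    rw [lintegral_const_mul _ (by fun_prop), lint_sq (schwartz_sq_int g), ENNReal.ofReal_mul hε.le]
  have hb2 := wlint hρ0 hε hC0 g
  have hreal : -(∫ q : EuclideanSpace ℝ (Fin n) × EuclideanSpace ℝ (Fin n),
      (A (WithLp.toLp 2 q) : ℂ) * RR g q).re ≤ Cr * (3 * ε * P + 2 * C0 ^ 2 / ε * Q) := by
    have h1 : ENNReal.ofReal (-(∫ q : EuclideanSpace ℝ (Fin n) × EuclideanSpace ℝ (Fin n),
      (A (WithLp.toLp 2 q) : ℂ) * RR g q).re) ≤ ENNReal.ofReal (Cr * (3 * ε * P + 2 * C0 ^ 2 / ε * Q)) := by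
      refine hmain.trans ?_
      rw [ENNReal.ofReal_mul hCr0, hCr, ENNReal.ofReal_toReal hCn]
      gcongr
      rw [hb1]
      calc _ ≤ ENNReal.ofReal (ε * P) + ENNReal.ofReal (2 * ε * P + 2 * C0 ^ 2 / ε * Q) := by
            gcongr
        _ = _ := by
            rw [← ENNReal.ofReal_add (by positivity) (by positivity)]; congr 1; ring
    exact (ENNReal.ofReal_le_ofReal_iff (by positivity)).1 h1
  set T := ∫ x, OpKN (fun x ξ => ((σ x ξ : ℝ) : ℂ)) (⇑f) x * (starRingEnd ℂ) (f x) with hT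
  have hsplit : (∫ q : EuclideanSpace ℝ (Fin n) × EuclideanSpace ℝ (Fin n),
      (A (WithLp.toLp 2 q) : ℂ) * RR g q) = ((l ^ n : ℝ) : ℂ) * T - ((c₀ * P : ℝ) : ℂ) := by
    rw [hT, ← sca_op l hl hs.continuous hB f, ← hg, Complex.ofReal_mul, hP, ← RR_integral g,
      ← integral_const_mul, ← integral_sub]
    · refine integral_congr_ae (Filter.Eventually.of_forall fun q => ?_)
      simp only [hA]; push_cast; ring
    · exact RR_bdd_int g (hs.continuous.comp ((Lsc l).continuous.comp (WithLp.prod_continuous_toLp 2 _ _)))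
        (fun q => hB _ _)
    · exact (RR_int g).const_mul _
  rw [hsplit, Complex.sub_re, Complex.re_ofReal_mul, Complex.ofReal_re] at hreal
  have hPf : P = l ^ n * ∫ x, ‖f x‖ ^ 2 := sca_norm l hl f
  have hQf : Q ≤ l ^ n * (l ^ 2 * sobSq (-ρ / 2) f) := sca_sob hρ0 hρ l hl1 hl f
  have hsob : 0 ≤ sobSq (-ρ / 2) (⇑f) :=
    integral_nonneg fun x => mul_nonneg (Real.rpow_nonneg (hw0 _).le _) (by positivity)
  set N2 := ∫ x, ‖f x‖ ^ 2
  set SS := sobSq (-ρ / 2) (⇑f)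
  have hln : 0 < l ^ n := by positivity
  have k1 : Cr * (3 * ε) * P ≤ c₀ / 2 * P := by gcongr
  have k2 : Cr * (2 * C0 ^ 2 / ε) * Q ≤ Cr * (2 * C0 ^ 2 / ε) * (l ^ n * (l ^ 2 * SS)) := by gcongr
  have k3 : l ^ n * (c₀ / 2 * N2 - Cr * (2 * C0 ^ 2 / ε) * l ^ 2 * SS) ≤ l ^ n * T.re := by
    have : c₀ / 2 * P = l ^ n * (c₀ / 2 * N2) := by rw [hPf]; ring
    have : Cr * (2 * C0 ^ 2 / ε) * (l ^ n * (l ^ 2 * SS)) = l ^ n * (Cr * (2 * C0 ^ 2 / ε) * l ^ 2 * SS) := by ring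
    linarith
  have k4 := le_of_mul_le_mul_left k3 hln
  linarith

end
end Gar

/-- two-term elliptic Gårding inequality in order `0`. -/
theorem garding_order_zero (n : ℕ) (hn : 1 ≤ n)
    (ρ : ℝ) (hρ : ρ ≤ 1) (hρ0 : 0 < ρ)
    (σ : (Fin n → ℝ) → (Fin n → ℝ) → ℝ)
    (hσ : SymbolClass 0 ρ 0 (fun x ξ => ((σ x ξ : ℝ) : ℂ)))
    (c₀ : ℝ) (hc₀ : 0 < c₀)
    (hell : ∀ x ξ, c₀ ≤ σ x ξ) :
    ∃ c > 0, ∃ C > 0, ∀ f : SchwartzMap (Fin n → ℝ) ℂ,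
      c * (∫ x, ‖f x‖ ^ 2) - C * sobSq (-ρ / 2) (⇑f)
        ≤ (∫ x, OpKN (fun x ξ => ((σ x ξ : ℝ) : ℂ)) (⇑f) x
            * (starRingEnd ℂ) (f x)).re := by
  exact Gar.gmain n hn ρ hρ hρ0 σ hσ c₀ hc₀ hell
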